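/- Call a pair (γ,δ) ∈ [N]×[T] admissible if (α,β,γ,δ) ∈ 𝔛 for some α ∈ [N], β ∈ [M]. Let γ₀ > 0. Suppose matrices H_χ, X_χ, Z_{χ,χ'} ∈ ℝ^{n×n} (with X_χ and Z_{χ,χ'} symmetric), G_{γ,δ} ∈ ℝ^{n×n}, and F_{γ,δ} ∈ ℝ^{m×n} satisfy, for all χ = (α,β,γ,δ) and χ' in 𝔛: the symmetric block matrix with diagonal blocks G_{γ,δ} + G_{γ,δ}ᵀ − X_χ, γ₀ I_q, H_χ + H_χᵀ − F̄_χ(Z), I_ℓ, with sub-diagonal blocks (3,1) = A_α G_{γ,δ} + B_α F_{γ,δ}, (3,2) = E_α, (4,1) = C_α G_{γ,δ} + D_α F_{γ,δ}, all other off-diagonal blocks zero (and the corresponding transposed blocks above the diagonal), is positive definite; and the symmetric block matrix [[Z_{χ,χ'}, H_χᵀ],[H_χ, X_{χ'}]] is positive definite. Then G_{γ,δ} is invertible for every admissible (γ,δ), and with feedback gains K_{γ,δ} = F_{γ,δ} G_{γ,δ}⁻¹ for admissible (γ,δ), the closed-loop system Σ_K is mean square stable and ‖Σ_K‖∞² <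 γ₀. -/

import Mathlib

open MeasureTheory ProbabilityTheory Matrix

noncomputable section

/-- The state space `[N] × [M] × [N] × [T]` of the extended process `r̄`.
`Fin N`, `Fin M`, `Fin T` play the roles of `[N] = {1,…,N}`, `[M]`, `[T]`
(with `Fin T` being the 0-indexed version of `[T] = {1,…,T}`, i.e. `δ ∈ [T]`
corresponds to `δ - 1 : Fin T`). -/
abbrev XT (NN MM T : ℕ) : Type := Fin NN × Fin MM × Fin NN × Fin T

/-- `X` is a time-homogeneous Markov chain with transition probability matrix `P`:
for every `k`, every state `j` and every sequence of states `i`,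
`Pr(X(k+1) = j ∧ X(l) = i l for all l ≤ k) = P (i k) j * Pr(X(l) = i l for all l ≤ k)`. -/
def IsMarkovChain {Ω : Type} {_mΩ : MeasurableSpace Ω} (μ : Measure Ω) {S : Type}
    (X : ℕ → Ω → S) (P : S → S → ℝ) : Prop :=
  ∀ (k : ℕ) (j : S) (i : ℕ → S),
    (μ {ω | X (k + 1) ω = j ∧ ∀ l ≤ k, X l ω = i l}).toReal
      = P (i k) j * (μ {ω | ∀ l ≤ k, X l ω = i l}).toReal

/-- `⌊m⌋_T`, the unique element of `{0,…,T-1}` congruent to `m` modulo `T`, as `Fin T`. -/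
def intToFin (T : ℕ) [NeZero T] (a : ℤ) : Fin T :=
  ⟨(a % (T : ℤ)).toNat, by
    have hT : 0 < (T : ℤ) := by
      exact_mod_cast Nat.pos_of_ne_zero (NeZero.ne T)
    have h1 : 0 ≤ a % (T : ℤ) := Int.emod_nonneg a (by omega)
    have h2 : a % (T : ℤ) < (T : ℤ) := Int.emod_lt_of_pos a hT
    omega⟩

-- `τ(k)`: the most recent observation time `≤ k` (i.e. the largest `j ≤ k` with
-- `f(s(j)) = 1`), or `τ₀` if no observation has occurred up to time `k` (`k < t₀`).
open Classical in
def tauZ {Ω : Type} {MM : ℕ} (s : ℕ → Ω → Fin MM) (f : Fin MM → Bool)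
    (τ₀ : ℤ) (k : ℕ) (ω : Ω) : ℤ :=
  if ∃ j ≤ k, f (s j ω) = true
  then ((Nat.findGreatest (fun j => f (s j ω) = true) k : ℕ) : ℤ)
  else τ₀

-- `σ(k) = r(τ(k))` if an observation occurred by time `k` (i.e. `k ≥ t₀`), else `σ₀`.
open Classical in
def sigmaProc {Ω : Type} {NN MM : ℕ} (r : ℕ → Ω → Fin NN) (s : ℕ → Ω → Fin MM)
    (f : Fin MM → Bool) (σ₀ : Fin NN) (k : ℕ) (ω : Ω) : Fin NN :=
  if ∃ j ≤ k, f (s j ω) = true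
  then r (Nat.findGreatest (fun j => f (s j ω) = true) k) ω
  else σ₀

/-- `ρ(k) = ⌊k - τ(k)⌋_T + 1 ∈ [T]`, represented 0-indexed as `⌊k - τ(k)⌋_T : Fin T`. -/
def rhoProc {Ω : Type} {MM T : ℕ} [NeZero T] (s : ℕ → Ω → Fin MM) (f : Fin MM → Bool)
    (τ₀ : ℤ) (k : ℕ) (ω : Ω) : Fin T :=
  intToFin T ((k : ℤ) - tauZ s f τ₀ k ω)

/-- The extended process `r̄(k) = (r(k), s(k), σ(k), ρ(k))`. -/
def rbarProc {Ω : Type} {NN MM T : ℕ} [NeZero T] (r : ℕ → Ω → Fin NN)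
    (s : ℕ → Ω → Fin MM) (f : Fin MM → Bool) (τ₀ : ℤ) (σ₀ : Fin NN)
    (k : ℕ) (ω : Ω) : XT NN MM T :=
  (r k ω, s k ω, sigmaProc r s f σ₀ k ω, rhoProc s f τ₀ k ω)

/-- Membership in `𝔛`: if `f(β) = 1` then `α = γ` and `δ = 1` (0-indexed: `δ = 0`). -/
def inX {NN MM T : ℕ} [NeZero T] (f : Fin MM → Bool) (χ : XT NN MM T) : Prop :=
  f χ.2.1 = true → χ.1 = χ.2.2.1 ∧ χ.2.2.2 = 0

/-- The transition probabilities `p̄_{χχ'}` of the extended chain. The condition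
`⌊δ' - δ - 1⌋_T = 0` for `δ, δ' ∈ [T]` is, in 0-indexed form, `δ' = δ + 1` in `Fin T`. -/
def pbar {NN MM T : ℕ} [NeZero T] (P : Matrix (Fin NN) (Fin NN) ℝ)
    (Q : Matrix (Fin MM) (Fin MM) ℝ) (f : Fin MM → Bool) (χ χ' : XT NN MM T) : ℝ :=
  (if f χ'.2.1 = true
    then (if χ'.1 = χ'.2.2.1 ∧ χ'.2.2.2 = 0 then (1 : ℝ) else 0)
    else (if χ'.2.2.1 = χ.2.2.1 ∧ χ'.2.2.2 = χ.2.2.2 + 1 then (1 : ℝ) else 0))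
  * P χ.1 χ'.1 * Q χ.2.1 χ'.2.1

/-- The state trajectory of the closed-loop system
`x(k+1) = A(mode(k)) x(k) + E(mode(k)) w(k)`, `x(0) = x₀`. -/
def traj {Ω S : Type} {n q : ℕ}
    (Amat : S → Matrix (Fin n) (Fin n) ℝ) (Emat : S → Matrix (Fin n) (Fin q) ℝ)
    (mode : ℕ → Ω → S) (w : ℕ → Ω → Fin q → ℝ) (x0 : Fin n → ℝ) : ℕ → Ω → Fin n → ℝ
  | 0, _ => x0
  | (k + 1), ω =>
      (Amat (mode k ω)).mulVec (traj Amat Emat mode w x0 k ω)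
        + (Emat (mode k ω)).mulVec (w k ω)

/-- `A_{K,χ} = A_α + B_α K_{γ,δ}`. -/
def AKmat {NN MM T n m : ℕ} (A : Fin NN → Matrix (Fin n) (Fin n) ℝ)
    (B : Fin NN → Matrix (Fin n) (Fin m) ℝ)
    (K : Fin NN → Fin T → Matrix (Fin m) (Fin n) ℝ) (χ : XT NN MM T) :
    Matrix (Fin n) (Fin n) ℝ :=
  A χ.1 + B χ.1 * K χ.2.2.1 χ.2.2.2

/-- `C_{K,χ} = C_α + D_α K_{γ,δ}`. -/
def CKmat {NN MM T n m ℓ : ℕ} (C : Fin NN → Matrix (Fin ℓ) (Fin n) ℝ)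
    (D : Fin NN → Matrix (Fin ℓ) (Fin m) ℝ)
    (K : Fin NN → Fin T → Matrix (Fin m) (Fin n) ℝ) (χ : XT NN MM T) :
    Matrix (Fin ℓ) (Fin n) ℝ :=
  C χ.1 + D χ.1 * K χ.2.2.1 χ.2.2.2

/-- Squared Euclidean norm of a vector, as an extended nonnegative real. -/
def sqE {d : ℕ} (v : Fin d → ℝ) : ENNReal := ENNReal.ofReal (∑ i, (v i) ^ 2)

-- The operator `D̄_χ(R) = ∑_{χ' ∈ 𝔛} p̄_{χ'χ} R_{χ'}`.
open Classical in
def Dop {NN MM T n : ℕ} [NeZero T] (P : Matrix (Fin NN) (Fin NN) ℝ)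
    (Q : Matrix (Fin MM) (Fin MM) ℝ) (f : Fin MM → Bool)
    (R : XT NN MM T → Matrix (Fin n) (Fin n) ℝ) (χ : XT NN MM T) :
    Matrix (Fin n) (Fin n) ℝ :=
  ∑ χ' : XT NN MM T, if inX f χ' then pbar P Q f χ' χ • R χ' else 0

-- The operator `F̄_χ(Z) = ∑_{χ' ∈ 𝔛} p̄_{χχ'} Z_{χ,χ'}`.
open Classical in
def Fop {NN MM T n : ℕ} [NeZero T] (P : Matrix (Fin NN) (Fin NN) ℝ)
    (Q : Matrix (Fin MM) (Fin MM) ℝ) (f : Fin MM → Bool)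
    (Z : XT NN MM T → XT NN MM T → Matrix (Fin n) (Fin n) ℝ) (χ : XT NN MM T) :
    Matrix (Fin n) (Fin n) ℝ :=
  ∑ χ' : XT NN MM T, if inX f χ' then pbar P Q f χ χ' • Z χ χ' else 0

/-- A pair `(γ,δ) ∈ [N] × [T]` is admissible if `(α,β,γ,δ) ∈ 𝔛` for some `α, β`. -/
def Admissible {NN MM T : ℕ} [NeZero T] (f : Fin MM → Bool) (g : Fin NN) (d : Fin T) : Prop :=
  ∃ (α : Fin NN) (β : Fin MM), inX (T := T) f (α, β, g, d)

/-- A realization, on some probability space, of the pair of independent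
time-homogeneous Markov chains `(r, s)` with transition matrices `P` and `Q`. -/
structure MJLSReal (NN MM : ℕ) (P : Matrix (Fin NN) (Fin NN) ℝ)
    (Q : Matrix (Fin MM) (Fin MM) ℝ) : Type 1 where
  Ω : Type
  inst : MeasurableSpace Ω
  μ : @Measure Ω inst
  prob : IsProbabilityMeasure μ
  r : ℕ → Ω → Fin NN
  s : ℕ → Ω → Fin MM
  meas_r : ∀ k, Measurable[inst] (r k)
  meas_s : ∀ k, Measurable[inst] (s k)
  markov_r : IsMarkovChain μ r fun i j => P i j
  markov_s : IsMarkovChain μ s fun i j => Q i j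
  indep : IndepFun (fun ω l => r l ω) (fun ω l => s l ω) μ

/-- A realization, on some probability space, of a time-homogeneous Markov chain `θ`
taking values in `𝔛` with transition probabilities `p̄`. -/
structure ThetaReal (NN MM T : ℕ) [NeZero T] (P : Matrix (Fin NN) (Fin NN) ℝ)
    (Q : Matrix (Fin MM) (Fin MM) ℝ) (f : Fin MM → Bool) : Type 1 where
  Ω : Type
  inst : MeasurableSpace Ω
  μ : @Measure Ω inst
  prob : IsProbabilityMeasure μ
  θ : ℕ → Ω → XT NN MM T
  meas : ∀ k, Measurable[inst] (θ k)
  mem : ∀ k ω, inX f (θ k ω)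
  markov : IsMarkovChain μ θ (pbar P Q f)

/-- Mean square stability of the closed-loop system `Σ_K`: there are `c > 0` and
`λ ∈ [0,1)` such that for every realization, every deterministic initialization
(`r(0) = r₀`, `s(0) = s₀` a.s., together with `σ₀` and `τ₀ ≤ 0`, so that `r̄(0)`
is a deterministic element of `𝔛`), every `x₀` and every `k`,
`E[‖x(k)‖²] ≤ c λ^k ‖x₀‖²` (with `w ≡ 0`). -/
def MeanSquareStable {NN MM T n m q : ℕ} [NeZero T]
    (P : Matrix (Fin NN) (Fin NN) ℝ) (Qm : Matrix (Fin MM) (Fin MM) ℝ) (f : Fin MM → Bool)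
    (A : Fin NN → Matrix (Fin n) (Fin n) ℝ) (B : Fin NN → Matrix (Fin n) (Fin m) ℝ)
    (E : Fin NN → Matrix (Fin n) (Fin q) ℝ)
    (K : Fin NN → Fin T → Matrix (Fin m) (Fin n) ℝ) : Prop :=
  ∃ c : ℝ, 0 < c ∧ ∃ lam : ℝ, 0 ≤ lam ∧ lam < 1 ∧
    ∀ (S : MJLSReal NN MM P Qm) (τ₀ : ℤ), τ₀ ≤ 0 →
      ∀ (σ₀ r₀ : Fin NN) (s₀ : Fin MM),
        (∀ᵐ ω ∂S.μ, S.r 0 ω = r₀ ∧ S.s 0 ω = s₀) →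
        ∀ (x0 : Fin n → ℝ) (k : ℕ),
          (∫⁻ ω, sqE (traj (AKmat A B K) (fun χ => E χ.1)
              (rbarProc S.r S.s f τ₀ σ₀) (fun _ _ => 0) x0 k ω) ∂S.μ)
            ≤ ENNReal.ofReal (c * lam ^ k * ∑ i, (x0 i) ^ 2)

/-- Mean square stability of `Σ̄_K` (the system driven by the chain `θ`). -/
def MeanSquareStableBar {NN MM T n m q : ℕ} [NeZero T]
    (P : Matrix (Fin NN) (Fin NN) ℝ) (Qm : Matrix (Fin MM) (Fin MM) ℝ) (f : Fin MM → Bool)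
    (A : Fin NN → Matrix (Fin n) (Fin n) ℝ) (B : Fin NN → Matrix (Fin n) (Fin m) ℝ)
    (E : Fin NN → Matrix (Fin n) (Fin q) ℝ)
    (K : Fin NN → Fin T → Matrix (Fin m) (Fin n) ℝ) : Prop :=
  ∃ c : ℝ, 0 < c ∧ ∃ lam : ℝ, 0 ≤ lam ∧ lam < 1 ∧
    ∀ (S : ThetaReal NN MM T P Qm f) (χ : XT NN MM T), inX f χ →
      (∀ᵐ ω ∂S.μ, S.θ 0 ω = χ) →
      ∀ (x0 : Fin n → ℝ) (k : ℕ),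
        (∫⁻ ω, sqE (traj (AKmat A B K) (fun χ' => E χ'.1) S.θ (fun _ _ => 0) x0 k ω) ∂S.μ)
          ≤ ENNReal.ofReal (c * lam ^ k * ∑ i, (x0 i) ^ 2)

/-- The impulse disturbance `w = e_i φ`, i.e. `w(0) = e_i` and `w(k) = 0` for `k ≥ 1`. -/
def impulse {Ω : Type} (q : ℕ) (i : Fin q) : ℕ → Ω → Fin q → ℝ :=
  fun k _ j => if k = 0 ∧ j = i then 1 else 0

/-- `∑_k E[‖z(k; 0, χ, e_i φ)‖²]` for `Σ_K` on a given realization with data `(τ₀, σ₀)`. -/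
def H2TermSigma {NN MM T n m q ℓ : ℕ} [NeZero T]
    {P : Matrix (Fin NN) (Fin NN) ℝ} {Qm : Matrix (Fin MM) (Fin MM) ℝ}
    (S : MJLSReal NN MM P Qm) (f : Fin MM → Bool) (τ₀ : ℤ) (σ₀ : Fin NN)
    (A : Fin NN → Matrix (Fin n) (Fin n) ℝ) (B : Fin NN → Matrix (Fin n) (Fin m) ℝ)
    (C : Fin NN → Matrix (Fin ℓ) (Fin n) ℝ) (D : Fin NN → Matrix (Fin ℓ) (Fin m) ℝ)
    (E : Fin NN → Matrix (Fin n) (Fin q) ℝ)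
    (K : Fin NN → Fin T → Matrix (Fin m) (Fin n) ℝ) (i : Fin q) : ENNReal :=
  ∑' k : ℕ, ∫⁻ ω, sqE ((CKmat C D K (rbarProc S.r S.s f τ₀ σ₀ k ω)).mulVec
      (traj (AKmat A B K) (fun χ => E χ.1) (rbarProc S.r S.s f τ₀ σ₀)
        (impulse q i) 0 k ω)) ∂S.μ

-- `‖Σ_K‖₂² < γ`, where `‖Σ_K‖₂² = ∑_{i=1}^q ∑_{χ ∈ 𝔛} μ̄(χ) ‖z(⬝;0,χ,e_iφ)‖₂²` and the
-- expectations are over arbitrary realizations with deterministic initialization `r̄(0) = χ`.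
open Classical in
def H2SqLtSigma {NN MM T n m q ℓ : ℕ} [NeZero T]
    (P : Matrix (Fin NN) (Fin NN) ℝ) (Qm : Matrix (Fin MM) (Fin MM) ℝ) (f : Fin MM → Bool)
    (A : Fin NN → Matrix (Fin n) (Fin n) ℝ) (B : Fin NN → Matrix (Fin n) (Fin m) ℝ)
    (C : Fin NN → Matrix (Fin ℓ) (Fin n) ℝ) (D : Fin NN → Matrix (Fin ℓ) (Fin m) ℝ)
    (E : Fin NN → Matrix (Fin n) (Fin q) ℝ)
    (K : Fin NN → Fin T → Matrix (Fin m) (Fin n) ℝ)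
    (μbar : XT NN MM T → ℝ) (γ : ℝ) : Prop :=
  ∀ (S : Fin q → XT NN MM T → MJLSReal NN MM P Qm)
    (τ : Fin q → XT NN MM T → ℤ) (σv : Fin q → XT NN MM T → Fin NN),
    (∀ i χ, inX f χ → τ i χ ≤ 0 ∧
        (∀ᵐ ω ∂(S i χ).μ, rbarProc (S i χ).r (S i χ).s f (τ i χ) (σv i χ) 0 ω = χ)) →
    (∑ i : Fin q, ∑ χ : XT NN MM T,
        if inX f χ
        then ENNReal.ofReal (μbar χ) * H2TermSigma (S i χ) f (τ i χ) (σv i χ) A B C D E K i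
        else 0)
      < ENNReal.ofReal γ

/-- `∑_k E[‖z̄(k; 0, χ, e_i φ)‖²]` for `Σ̄_K` on a given realization of `θ`. -/
def H2TermBar {NN MM T n m q ℓ : ℕ} [NeZero T]
    {P : Matrix (Fin NN) (Fin NN) ℝ} {Qm : Matrix (Fin MM) (Fin MM) ℝ} {f : Fin MM → Bool}
    (S : ThetaReal NN MM T P Qm f)
    (A : Fin NN → Matrix (Fin n) (Fin n) ℝ) (B : Fin NN → Matrix (Fin n) (Fin m) ℝ)
    (C : Fin NN → Matrix (Fin ℓ) (Fin n) ℝ) (D : Fin NN → Matrix (Fin ℓ) (Fin m) ℝ)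
    (E : Fin NN → Matrix (Fin n) (Fin q) ℝ)
    (K : Fin NN → Fin T → Matrix (Fin m) (Fin n) ℝ) (i : Fin q) : ENNReal :=
  ∑' k : ℕ, ∫⁻ ω, sqE ((CKmat C D K (S.θ k ω)).mulVec
      (traj (AKmat A B K) (fun χ => E χ.1) S.θ (impulse q i) 0 k ω)) ∂S.μ

-- `‖Σ̄_K‖₂² < γ` (the `H₂` norm of `Σ̄_K`, defined with `θ` in place of `r̄`).
open Classical in
def H2SqLtBar {NN MM T n m q ℓ : ℕ} [NeZero T]
    (P : Matrix (Fin NN) (Fin NN) ℝ) (Qm : Matrix (Fin MM) (Fin MM) ℝ) (f : Fin MM → Bool)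
    (A : Fin NN → Matrix (Fin n) (Fin n) ℝ) (B : Fin NN → Matrix (Fin n) (Fin m) ℝ)
    (C : Fin NN → Matrix (Fin ℓ) (Fin n) ℝ) (D : Fin NN → Matrix (Fin ℓ) (Fin m) ℝ)
    (E : Fin NN → Matrix (Fin n) (Fin q) ℝ)
    (K : Fin NN → Fin T → Matrix (Fin m) (Fin n) ℝ)
    (μbar : XT NN MM T → ℝ) (γ : ℝ) : Prop :=
  ∀ (S : Fin q → XT NN MM T → ThetaReal NN MM T P Qm f),
    (∀ i χ, inX f χ → (∀ᵐ ω ∂(S i χ).μ, (S i χ).θ 0 ω = χ)) →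
    (∑ i : Fin q, ∑ χ : XT NN MM T,
        if inX f χ
        then ENNReal.ofReal (μbar χ) * H2TermBar (S i χ) A B C D E K i
        else 0)
      < ENNReal.ofReal γ

/-- The σ-algebra `Θ_k` generated by `r(0), s(0), …, r(k), s(k)`, for a realization. -/
def sigFiltSigma {NN MM : ℕ} {P : Matrix (Fin NN) (Fin NN) ℝ}
    {Q : Matrix (Fin MM) (Fin MM) ℝ} (S : MJLSReal NN MM P Q) (k : ℕ) :
    MeasurableSpace S.Ω :=
  ⨆ j ∈ Finset.range (k + 1),
    (MeasurableSpace.comap (S.r j) inferInstance ⊔ MeasurableSpace.comap (S.s j) inferInstance)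

/-- The σ-algebra generated by `θ(0), …, θ(k)`, for a realization of `θ`. -/
def sigFiltBar {NN MM T : ℕ} [NeZero T] {P : Matrix (Fin NN) (Fin NN) ℝ}
    {Q : Matrix (Fin MM) (Fin MM) ℝ} {f : Fin MM → Bool} (S : ThetaReal NN MM T P Q f)
    (k : ℕ) : MeasurableSpace S.Ω :=
  ⨆ j ∈ Finset.range (k + 1), MeasurableSpace.comap (S.θ j) inferInstance

/-- `Σ_K` satisfies `‖Σ_K‖∞² < γ`: there is `0 ≤ c < γ` such that `‖z‖₂² ≤ c ‖w‖₂²`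
for every realization, every deterministic initialization `r̄(0) = r̄₀ ∈ 𝔛`, and
every nonzero `w ∈ ℓ²(ℝ^q)` adapted to `(Θ_k)_k` (with `x₀ = 0`). -/
def HinfSqLtSigma {NN MM T n m q ℓ : ℕ} [NeZero T]
    (P : Matrix (Fin NN) (Fin NN) ℝ) (Qm : Matrix (Fin MM) (Fin MM) ℝ) (f : Fin MM → Bool)
    (A : Fin NN → Matrix (Fin n) (Fin n) ℝ) (B : Fin NN → Matrix (Fin n) (Fin m) ℝ)
    (C : Fin NN → Matrix (Fin ℓ) (Fin n) ℝ) (D : Fin NN → Matrix (Fin ℓ) (Fin m) ℝ)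
    (E : Fin NN → Matrix (Fin n) (Fin q) ℝ)
    (K : Fin NN → Fin T → Matrix (Fin m) (Fin n) ℝ) (γ : ℝ) : Prop :=
  ∃ c : ℝ, 0 ≤ c ∧ c < γ ∧
    ∀ (S : MJLSReal NN MM P Qm) (τ₀ : ℤ), τ₀ ≤ 0 → ∀ (σ₀ : Fin NN) (χ : XT NN MM T),
      inX f χ → (∀ᵐ ω ∂S.μ, rbarProc S.r S.s f τ₀ σ₀ 0 ω = χ) →
      ∀ (w : ℕ → S.Ω → Fin q → ℝ),
        (∀ k, Measurable[sigFiltSigma S k] (w k)) →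
        0 < (∑' k : ℕ, ∫⁻ ω, sqE (w k ω) ∂S.μ) →
        (∑' k : ℕ, ∫⁻ ω, sqE (w k ω) ∂S.μ) ≠ ⊤ →
        (∑' k : ℕ, ∫⁻ ω, sqE ((CKmat C D K (rbarProc S.r S.s f τ₀ σ₀ k ω)).mulVec
            (traj (AKmat A B K) (fun χ' => E χ'.1) (rbarProc S.r S.s f τ₀ σ₀) w 0 k ω)) ∂S.μ)
          ≤ ENNReal.ofReal c * (∑' k : ℕ, ∫⁻ ω, sqE (w k ω) ∂S.μ)

/-- `Σ̄_K` satisfies `‖Σ̄_K‖∞² < γ` (disturbances adapted to the filtration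
generated by `θ`). -/
def HinfSqLtBar {NN MM T n m q ℓ : ℕ} [NeZero T]
    (P : Matrix (Fin NN) (Fin NN) ℝ) (Qm : Matrix (Fin MM) (Fin MM) ℝ) (f : Fin MM → Bool)
    (A : Fin NN → Matrix (Fin n) (Fin n) ℝ) (B : Fin NN → Matrix (Fin n) (Fin m) ℝ)
    (C : Fin NN → Matrix (Fin ℓ) (Fin n) ℝ) (D : Fin NN → Matrix (Fin ℓ) (Fin m) ℝ)
    (E : Fin NN → Matrix (Fin n) (Fin q) ℝ)
    (K : Fin NN → Fin T → Matrix (Fin m) (Fin n) ℝ) (γ : ℝ) : Prop :=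
  ∃ c : ℝ, 0 ≤ c ∧ c < γ ∧
    ∀ (S : ThetaReal NN MM T P Qm f) (χ : XT NN MM T),
      inX f χ → (∀ᵐ ω ∂S.μ, S.θ 0 ω = χ) →
      ∀ (w : ℕ → S.Ω → Fin q → ℝ),
        (∀ k, Measurable[sigFiltBar S k] (w k)) →
        0 < (∑' k : ℕ, ∫⁻ ω, sqE (w k ω) ∂S.μ) →
        (∑' k : ℕ, ∫⁻ ω, sqE (w k ω) ∂S.μ) ≠ ⊤ →
        (∑' k : ℕ, ∫⁻ ω, sqE ((CKmat C D K (S.θ k ω)).mulVec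
            (traj (AKmat A B K) (fun χ' => E χ'.1) S.θ w 0 k ω)) ∂S.μ)
          ≤ ENNReal.ofReal c * (∑' k : ℕ, ∫⁻ ω, sqE (w k ω) ∂S.μ)

/-- The symmetric 4×4 block matrix appearing in the `H∞` LMI, with diagonal blocks
`D1, γ I_q, D3, I_ℓ`, sub-diagonal blocks `(3,1) = B31`, `(3,2) = B32`, `(4,1) = B41`,
the corresponding transposed blocks above the diagonal, and zeros elsewhere. -/
def hinfBlock {n q ℓ : ℕ} (γ : ℝ) (D1 D3 : Matrix (Fin n) (Fin n) ℝ)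
    (B31 : Matrix (Fin n) (Fin n) ℝ) (B32 : Matrix (Fin n) (Fin q) ℝ)
    (B41 : Matrix (Fin ℓ) (Fin n) ℝ) :
    Matrix ((Fin n ⊕ Fin q) ⊕ (Fin n ⊕ Fin ℓ)) ((Fin n ⊕ Fin q) ⊕ (Fin n ⊕ Fin ℓ)) ℝ :=
  Matrix.fromBlocks
    (Matrix.fromBlocks D1 0 0 (γ • (1 : Matrix (Fin q) (Fin q) ℝ)))
    (Matrix.fromBlocks B31ᵀ B41ᵀ B32ᵀ 0)
    (Matrix.fromBlocks B31 B32 B41 0)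
    (Matrix.fromBlocks D3 0 0 (1 : Matrix (Fin ℓ) (Fin ℓ) ℝ))

theorem aux_quad_lower {ι : Type} [Fintype ι] (Φ : (ι → ℝ) → ℝ) (hc : Continuous Φ)
    (hh : ∀ (c : ℝ) x, Φ (c • x) = c ^ 2 * Φ x) (hp : ∀ x, x ≠ 0 → 0 < Φ x) :
    ∃ ε : ℝ, 0 < ε ∧ ∀ x, ε * (x ⬝ᵥ x) ≤ Φ x := by
  have h0 : Φ 0 = 0 := by simpa using hh 0 0
  by_cases hne : (Metric.sphere (0 : ι → ℝ) 1).Nonempty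
  · obtain ⟨x0, hx0, hmin⟩ := (isCompact_sphere (0 : ι → ℝ) 1).exists_isMinOn hne hc.continuousOn
    have hx0' : x0 ≠ 0 := by
      rintro rfl
      simp at hx0
    have hm : 0 < Φ x0 := hp _ hx0'
    have hN : (0 : ℝ) < Fintype.card ι + 1 := by positivity
    refine ⟨Φ x0 / (Fintype.card ι + 1), by positivity, fun x => ?_⟩
    by_cases hx : x = 0
    · subst hx; simp [h0]
    have hn : 0 < ‖x‖ := norm_pos_iff.mpr hx
    have h1 : Φ x0 ≤ Φ (‖x‖⁻¹ • x) := by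
      apply hmin
      simp [norm_smul, hn.ne']
    rw [hh] at h1
    have h2 : x ⬝ᵥ x ≤ (Fintype.card ι + 1) * ‖x‖ ^ 2 := by
      have : x ⬝ᵥ x ≤ ∑ i : ι, ‖x‖ ^ 2 := by
        apply Finset.sum_le_sum
        intro i _
        have := norm_le_pi_norm x i
        rw [← sq, ← sq_abs]
        exact pow_le_pow_left₀ (abs_nonneg _) this 2
      simp at this
      nlinarith [sq_nonneg ‖x‖]
    have h3 : Φ x0 * ‖x‖ ^ 2 ≤ Φ x := by
      calc Φ x0 * ‖x‖ ^ 2 ≤ (‖x‖⁻¹ ^ 2 * Φ x) * ‖x‖ ^ 2 := by gcongr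
        _ = Φ x := by field_simp
    calc Φ x0 / (Fintype.card ι + 1) * (x ⬝ᵥ x)
        ≤ Φ x0 / (Fintype.card ι + 1) * ((Fintype.card ι + 1) * ‖x‖ ^ 2) := by gcongr
      _ = Φ x0 * ‖x‖ ^ 2 := by field_simp
      _ ≤ Φ x := h3
  · refine ⟨1, one_pos, fun x => ?_⟩
    have hx : x = 0 := by
      by_contra hx
      apply hne
      have hn : 0 < ‖x‖ := norm_pos_iff.mpr hx
      exact ⟨‖x‖⁻¹ • x, by simp [norm_smul, hn.ne']⟩
    subst hx; simp [h0]

theorem aux_quad_upper {ι : Type} [Fintype ι] (Φ : (ι → ℝ) → ℝ) (hc : Continuous Φ)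
    (hh : ∀ (c : ℝ) x, Φ (c • x) = c ^ 2 * Φ x) :
    ∃ C : ℝ, 0 < C ∧ ∀ x, Φ x ≤ C * (x ⬝ᵥ x) := by
  have h0 : Φ 0 = 0 := by simpa using hh 0 0
  by_cases hne : (Metric.sphere (0 : ι → ℝ) 1).Nonempty
  · obtain ⟨x0, hx0, hmax⟩ := (isCompact_sphere (0 : ι → ℝ) 1).exists_isMaxOn hne hc.continuousOn
    refine ⟨|Φ x0| + 1, by positivity, fun x => ?_⟩
    by_cases hx : x = 0
    · subst hx; simp [h0]
    have hn : 0 < ‖x‖ := norm_pos_iff.mpr hx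
    have h1 : Φ (‖x‖⁻¹ • x) ≤ Φ x0 := by
      apply hmax
      simp [norm_smul, hn.ne']
    rw [hh] at h1
    have hs : 0 ≤ x ⬝ᵥ x := Finset.sum_nonneg fun i _ => mul_self_nonneg _
    have h2 : ‖x‖ ^ 2 ≤ x ⬝ᵥ x := by
      have : ‖x‖ ≤ Real.sqrt (x ⬝ᵥ x) := by
        rw [pi_norm_le_iff_of_nonneg (Real.sqrt_nonneg _)]
        intro i
        apply Real.le_sqrt_of_sq_le
        rw [Real.norm_eq_abs, sq_abs, sq]
        exact Finset.single_le_sum (f := fun i => x i * x i) (fun i _ => mul_self_nonneg _)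
          (Finset.mem_univ i)
      calc ‖x‖ ^ 2 ≤ Real.sqrt (x ⬝ᵥ x) ^ 2 := by gcongr
        _ = _ := Real.sq_sqrt hs
    calc Φ x = (‖x‖⁻¹ ^ 2 * Φ x) * ‖x‖ ^ 2 := by field_simp
      _ ≤ (|Φ x0| + 1) * ‖x‖ ^ 2 := by
        gcongr
        linarith [le_abs_self (Φ x0)]
      _ ≤ _ := by gcongr
  · refine ⟨1, one_pos, fun x => ?_⟩
    have hx : x = 0 := by
      by_contra hx
      apply hne
      have hn : 0 < ‖x‖ := norm_pos_iff.mpr hx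
      exact ⟨‖x‖⁻¹ • x, by simp [norm_smul, hn.ne']⟩
    subst hx; simp [h0]

/-- Block LMI in vector form. -/
theorem aux_block_pos {n q ℓ : ℕ} {γ : ℝ} {D1 D3 B31 : Matrix (Fin n) (Fin n) ℝ}
    {B32 : Matrix (Fin n) (Fin q) ℝ} {B41 : Matrix (Fin ℓ) (Fin n) ℝ}
    (h : (hinfBlock γ D1 D3 B31 B32 B41).PosDef)
    (u : Fin n → ℝ) (w : Fin q → ℝ) (v : Fin n → ℝ) (z : Fin ℓ → ℝ)
    (hne : u ≠ 0 ∨ w ≠ 0) :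
    0 < u ⬝ᵥ (D1 *ᵥ u) + γ * (w ⬝ᵥ w) + v ⬝ᵥ (D3 *ᵥ v) + z ⬝ᵥ z
      + 2 * (v ⬝ᵥ (B31 *ᵥ u)) + 2 * (v ⬝ᵥ (B32 *ᵥ w)) + 2 * (z ⬝ᵥ (B41 *ᵥ u)) := by
  have hx : Sum.elim (Sum.elim u w) (Sum.elim v z) ≠ 0 := by
    intro h0
    rcases hne with h1 | h1
    · exact h1 (funext fun i => congrFun h0 (Sum.inl (Sum.inl i)))
    · exact h1 (funext fun i => congrFun h0 (Sum.inl (Sum.inr i)))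
  have := h.dotProduct_mulVec_pos hx
  have t1 : u ⬝ᵥ (B31ᵀ *ᵥ v) = v ⬝ᵥ (B31 *ᵥ u) := by
    rw [mulVec_transpose, dotProduct_comm, dotProduct_mulVec]
  have t2 : w ⬝ᵥ (B32ᵀ *ᵥ v) = v ⬝ᵥ (B32 *ᵥ w) := by
    rw [mulVec_transpose, dotProduct_comm, dotProduct_mulVec]
  have t3 : u ⬝ᵥ (B41ᵀ *ᵥ z) = z ⬝ᵥ (B41 *ᵥ u) := by
    rw [mulVec_transpose, dotProduct_comm, dotProduct_mulVec]
  simp only [hinfBlock, star_trivial, fromBlocks_mulVec, Sum.elim_comp_inl, Sum.elim_comp_inr,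
    sumElim_dotProduct_sumElim, zero_mulVec, add_zero, zero_add, smul_mulVec, one_mulVec,
    dotProduct_add, dotProduct_smul, smul_eq_mul, ← Sum.elim_add_add, t1, t2, t3] at this
  linarith

theorem aux_block2 {n : ℕ} {Z H X : Matrix (Fin n) (Fin n) ℝ}
    (h : (Matrix.fromBlocks Z Hᵀ H X).PosDef) :
    X.PosDef ∧ ∀ v, (H *ᵥ v) ⬝ᵥ (X⁻¹ *ᵥ (H *ᵥ v)) ≤ v ⬝ᵥ (Z *ᵥ v) := by
  have hX : X.PosDef := by
    have := h.submatrix (e := Sum.inr) Sum.inr_injective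
    exact this
  refine ⟨hX, fun v => ?_⟩
  have hdet : IsUnit X.det := (Matrix.isUnit_iff_isUnit_det _).mp hX.isUnit
  have hy : X *ᵥ (X⁻¹ *ᵥ (H *ᵥ v)) = H *ᵥ v := by
    rw [mulVec_mulVec, Matrix.mul_nonsing_inv _ hdet, one_mulVec]
  generalize X⁻¹ *ᵥ (H *ᵥ v) = y at hy ⊢
  have := h.posSemidef.dotProduct_mulVec_nonneg (Sum.elim v (-y))
  have t1 : ∀ y, v ⬝ᵥ (Hᵀ *ᵥ y) = y ⬝ᵥ (H *ᵥ v) := fun y => by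
    rw [mulVec_transpose, dotProduct_comm, dotProduct_mulVec]
  simp only [star_trivial, fromBlocks_mulVec, Sum.elim_comp_inl, Sum.elim_comp_inr,
    sumElim_dotProduct_sumElim, dotProduct_add, t1, mulVec_neg, hy,
    neg_dotProduct, dotProduct_neg, neg_neg] at this
  rw [dotProduct_comm]
  linarith

theorem aux_G_unit {n : ℕ} {G X : Matrix (Fin n) (Fin n) ℝ} (hX : X.PosDef)
    (h : ∀ u, u ≠ 0 → 0 < u ⬝ᵥ ((G + Gᵀ - X) *ᵥ u)) : IsUnit G := by
  rw [← Matrix.mulVec_injective_iff_isUnit]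
  rw [← Matrix.coe_mulVecLin, ← LinearMap.ker_eq_bot, LinearMap.ker_eq_bot']
  intro u hu
  simp only [Matrix.mulVecLin_apply] at hu
  by_contra hne
  have h1 := h u hne
  have h2 := hX.dotProduct_mulVec_pos hne
  have t1 : u ⬝ᵥ (Gᵀ *ᵥ u) = u ⬝ᵥ (G *ᵥ u) := by
    rw [mulVec_transpose, dotProduct_comm, dotProduct_mulVec]
  simp only [star_trivial] at h2
  simp only [sub_mulVec, add_mulVec, dotProduct_sub, dotProduct_add, t1, hu, dotProduct_zero] at h1
  linarith

theorem aux_G_bound {n : ℕ} {G X : Matrix (Fin n) (Fin n) ℝ} (hX : X.PosDef) (u : Fin n → ℝ) :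
    u ⬝ᵥ ((G + Gᵀ - X) *ᵥ u) ≤ (G *ᵥ u) ⬝ᵥ (X⁻¹ *ᵥ (G *ᵥ u)) := by
  have t1 : u ⬝ᵥ (Gᵀ *ᵥ u) = u ⬝ᵥ (G *ᵥ u) := by
    rw [mulVec_transpose, dotProduct_comm, dotProduct_mulVec]
  have hdet : IsUnit X.det := (Matrix.isUnit_iff_isUnit_det _).mp hX.isUnit
  have h1 := hX.inv.posSemidef.dotProduct_mulVec_nonneg (G *ᵥ u - X *ᵥ u)
  have hXT : Xᵀ = X := hX.isHermitian
  have e1 : X⁻¹ *ᵥ (X *ᵥ u) = u := by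
    rw [mulVec_mulVec, Matrix.nonsing_inv_mul _ hdet, one_mulVec]
  have e2 : ∀ y, (X *ᵥ u) ⬝ᵥ (X⁻¹ *ᵥ y) = u ⬝ᵥ y := by
    intro y
    rw [← hXT, mulVec_transpose, ← dotProduct_mulVec, mulVec_mulVec, hXT,
      Matrix.mul_nonsing_inv _ hdet, one_mulVec]
  simp only [star_trivial, mulVec_sub, sub_dotProduct, dotProduct_sub, e1, e2] at h1
  rw [dotProduct_comm (G *ᵥ u) u] at h1
  rw [dotProduct_comm (X *ᵥ u) u] at h1
  simp only [sub_mulVec, add_mulVec, dotProduct_sub, dotProduct_add, t1]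
  linarith

theorem aux_diss {n m q ℓ : ℕ} {γ : ℝ} {A G X H Fz Y : Matrix (Fin n) (Fin n) ℝ}
    {B : Matrix (Fin n) (Fin m) ℝ} {E : Matrix (Fin n) (Fin q) ℝ} {C : Matrix (Fin ℓ) (Fin n) ℝ}
    {D : Matrix (Fin ℓ) (Fin m) ℝ} {F K : Matrix (Fin m) (Fin n) ℝ}
    (h : (hinfBlock γ (G + Gᵀ - X) (H + Hᵀ - Fz) (A * G + B * F) E (C * G + D * F)).PosDef)
    (hX : X.PosDef) (hG : IsUnit G) (hK : K = F * G⁻¹) (hY : Y.PosSemidef)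
    (hF : ∀ v, (H *ᵥ v) ⬝ᵥ (Y *ᵥ (H *ᵥ v)) ≤ v ⬝ᵥ (Fz *ᵥ v))
    (x : Fin n → ℝ) (w : Fin q → ℝ) (hne : x ≠ 0 ∨ w ≠ 0) :
    0 < x ⬝ᵥ (X⁻¹ *ᵥ x) + γ * (w ⬝ᵥ w)
      - ((A + B * K) *ᵥ x + E *ᵥ w) ⬝ᵥ (Y *ᵥ ((A + B * K) *ᵥ x + E *ᵥ w))
      - ((C + D * K) *ᵥ x) ⬝ᵥ ((C + D * K) *ᵥ x) := by
  have hdet : IsUnit G.det := (Matrix.isUnit_iff_isUnit_det _).mp hG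
  have hGx : G *ᵥ (G⁻¹ *ᵥ x) = x := by
    rw [mulVec_mulVec, Matrix.mul_nonsing_inv _ hdet, one_mulVec]
  have hKx : F *ᵥ (G⁻¹ *ᵥ x) = K *ᵥ x := by
    rw [hK, mulVec_mulVec]
  have hA : (A * G + B * F) *ᵥ (G⁻¹ *ᵥ x) = (A + B * K) *ᵥ x := by
    rw [add_mulVec, ← mulVec_mulVec, ← mulVec_mulVec, hGx, hKx, add_mulVec, mulVec_mulVec]
  have hC : (C * G + D * F) *ᵥ (G⁻¹ *ᵥ x) = (C + D * K) *ᵥ x := by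
    rw [add_mulVec, ← mulVec_mulVec, ← mulVec_mulVec, hGx, hKx, add_mulVec, mulVec_mulVec]
  set z := (C + D * K) *ᵥ x with hz
  set a := (A + B * K) *ᵥ x with ha
  set b := E *ᵥ w with hb
  have hu : G⁻¹ *ᵥ x ≠ 0 ∨ w ≠ 0 := by
    rcases hne with h1 | h1
    · left
      intro h0
      rw [h0, mulVec_zero] at hGx
      exact h1 hGx.symm
    · exact Or.inr h1
  have h1 := aux_block_pos h (G⁻¹ *ᵥ x) w (-(Y *ᵥ (a + b))) (-z) hu
  have h2 := aux_G_bound (G := G) hX (G⁻¹ *ᵥ x)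
  rw [hGx] at h2
  rw [hA, hC, ← hb] at h1
  set y := a + b with hy
  have hYT : Yᵀ = Y := hY.isHermitian
  have hsym : ∀ s t : Fin n → ℝ, s ⬝ᵥ (Y *ᵥ t) = t ⬝ᵥ (Y *ᵥ s) := by
    intro s t
    conv_lhs => rw [← hYT, mulVec_transpose, dotProduct_comm, ← dotProduct_mulVec]
  set v := -(Y *ᵥ y) with hv
  have h3 := hF v
  have h4 := hY.dotProduct_mulVec_nonneg (H *ᵥ v + y)
  have t1 : v ⬝ᵥ (Hᵀ *ᵥ v) = v ⬝ᵥ (H *ᵥ v) := by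
    rw [mulVec_transpose, dotProduct_comm, dotProduct_mulVec]
  have t2 : v ⬝ᵥ (H *ᵥ v) = - (y ⬝ᵥ (Y *ᵥ (H *ᵥ v))) := by
    nth_rewrite 1 [hv]
    rw [neg_dotProduct, dotProduct_comm, hsym]
  have t3 : v ⬝ᵥ a + v ⬝ᵥ b = - (y ⬝ᵥ (Y *ᵥ y)) := by
    rw [← dotProduct_add, ← hy, hv, neg_dotProduct, dotProduct_comm]
  simp only [star_trivial, mulVec_add, add_dotProduct, dotProduct_add] at h4
  rw [hsym (H *ᵥ v) y] at h4
  simp only [sub_mulVec, add_mulVec, dotProduct_sub, dotProduct_add, t1] at h1 h2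
  simp only [neg_dotProduct, dotProduct_neg, neg_neg] at h1
  linarith

theorem aux_Fop_quad {NN MM T n : ℕ} [NeZero T] (P : Matrix (Fin NN) (Fin NN) ℝ)
    (Q : Matrix (Fin MM) (Fin MM) ℝ) (f : Fin MM → Bool)
    (Z : XT NN MM T → XT NN MM T → Matrix (Fin n) (Fin n) ℝ) (χ : XT NN MM T) (a : Fin n → ℝ) :
    a ⬝ᵥ (Fop P Q f Z χ *ᵥ a) = ∑ χ' : XT NN MM T,
      (open Classical in if inX f χ' then pbar P Q f χ χ' * (a ⬝ᵥ (Z χ χ' *ᵥ a)) else 0) := by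
  classical
  simp only [Fop]
  rw [Matrix.sum_mulVec, dotProduct_sum]
  refine Finset.sum_congr rfl fun χ' _ => ?_
  split_ifs <;> simp [smul_mulVec]

theorem aux_pbar_nonneg {NN MM T : ℕ} [NeZero T] {P : Matrix (Fin NN) (Fin NN) ℝ}
    {Q : Matrix (Fin MM) (Fin MM) ℝ} (hP0 : ∀ i j, 0 ≤ P i j) (hQ0 : ∀ i j, 0 ≤ Q i j)
    (f : Fin MM → Bool) (χ χ' : XT NN MM T) : 0 ≤ pbar P Q f χ χ' := by
  unfold pbar
  have := hP0 χ.1 χ'.1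
  have := hQ0 χ.2.1 χ'.2.1
  split_ifs <;> positivity

/-- One-step update of the extended state. -/
def stepX {NN MM T : ℕ} [NeZero T] (f : Fin MM → Bool) (χ : XT NN MM T)
    (c : Fin NN × Fin MM) : XT NN MM T :=
  if f c.2 = true then (c.1, c.2, c.1, 0) else (c.1, c.2, χ.2.2.1, χ.2.2.2 + 1)

theorem stepX_inX {NN MM T : ℕ} [NeZero T] (f : Fin MM → Bool) (χ : XT NN MM T)
    (c : Fin NN × Fin MM) : inX f (stepX f χ c) := by
  unfold stepX inX
  split_ifs with h <;> simp [h]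

theorem aux_sum_step {NN MM T : ℕ} [NeZero T] (P : Matrix (Fin NN) (Fin NN) ℝ)
    (Q : Matrix (Fin MM) (Fin MM) ℝ) (f : Fin MM → Bool) (χ : XT NN MM T)
    (g : XT NN MM T → ℝ) :
    (∑ χ' : XT NN MM T, (open Classical in if inX f χ' then pbar P Q f χ χ' * g χ' else 0))
      = ∑ c : Fin NN × Fin MM, P χ.1 c.1 * Q χ.2.1 c.2 * g (stepX f χ c) := by
  classical
  rw [Fintype.sum_prod_type, Fintype.sum_prod_type]
  refine Finset.sum_congr rfl fun a _ => ?_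
  rw [Fintype.sum_prod_type]
  refine Finset.sum_congr rfl fun b _ => ?_
  by_cases hb : f b = true
  · rw [Finset.sum_eq_single (a, 0)]
    · simp [inX, pbar, stepX, hb]
    · rintro ⟨c, d⟩ _ hne
      have : ¬ (a = c ∧ d = 0) := by
        rintro ⟨rfl, rfl⟩; exact hne rfl
      simp [inX, hb, this]
    · simp
  · rw [Finset.sum_eq_single (χ.2.2.1, χ.2.2.2 + 1)]
    · simp [inX, pbar, stepX, hb]
    · rintro ⟨c, d⟩ _ hne
      have : ¬ (c = χ.2.2.1 ∧ d = χ.2.2.2 + 1) := by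
        rintro ⟨rfl, rfl⟩; exact hne rfl
      simp [pbar, hb, this]
    · simp

/-- Uniform positive constant over a finite type. -/
theorem aux_unif {ι : Type} [Finite ι] (p : ι → ℝ → Prop)
    (hmono : ∀ i a b, 0 < b → b ≤ a → p i a → p i b) (h : ∀ i, ∃ ε, 0 < ε ∧ p i ε) :
    ∃ ε, 0 < ε ∧ ∀ i, p i ε := by
  choose e he hpe using h
  by_cases hι : Nonempty ι
  · obtain ⟨i0, hi0⟩ := Finite.exists_min e
    exact ⟨e i0, he i0, fun i => hmono i _ _ (he i0) (hi0 i) (hpe i)⟩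
  · exact ⟨1, one_pos, fun i => (hι ⟨i⟩).elim⟩

theorem aux_unif_up {ι : Type} [Finite ι] (p : ι → ℝ → Prop)
    (hmono : ∀ i a b, a ≤ b → p i a → p i b) (h : ∀ i, ∃ ε, 0 < ε ∧ p i ε) :
    ∃ ε, 0 < ε ∧ ∀ i, p i ε := by
  choose e he hpe using h
  by_cases hι : Nonempty ι
  · obtain ⟨i0, hi0⟩ := Finite.exists_max e
    exact ⟨e i0, he i0, fun i => hmono i _ _ (hi0 i) (hpe i)⟩
  · exact ⟨1, one_pos, fun i => (hι ⟨i⟩).elim⟩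

theorem aux_quad_cont {n : ℕ} (M : Matrix (Fin n) (Fin n) ℝ) :
    Continuous fun x : Fin n → ℝ => x ⬝ᵥ (M *ᵥ x) := by
  fun_prop

theorem aux_quad_hom {n : ℕ} (M : Matrix (Fin n) (Fin n) ℝ) (c : ℝ) (x : Fin n → ℝ) :
    (c • x) ⬝ᵥ (M *ᵥ (c • x)) = c ^ 2 * (x ⬝ᵥ (M *ᵥ x)) := by
  simp [mulVec_smul, smul_dotProduct, dotProduct_smul]; ring

theorem aux_dot_nonneg {n : ℕ} (x : Fin n → ℝ) : 0 ≤ x ⬝ᵥ x :=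
  Finset.sum_nonneg fun i _ => mul_self_nonneg _

/-- The storage function. -/
def Vfun {NN MM T n : ℕ} (X : XT NN MM T → Matrix (Fin n) (Fin n) ℝ) (χ : XT NN MM T)
    (x : Fin n → ℝ) : ℝ := x ⬝ᵥ ((X χ)⁻¹ *ᵥ x)

theorem aux_real
    {NN MM T n m q ℓ : ℕ} [NeZero T]
    (P : Matrix (Fin NN) (Fin NN) ℝ) (Qm : Matrix (Fin MM) (Fin MM) ℝ)
    (hP0 : ∀ i j, 0 ≤ P i j)
    (hQ0 : ∀ i j, 0 ≤ Qm i j)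
    (f : Fin MM → Bool)
    (A : Fin NN → Matrix (Fin n) (Fin n) ℝ) (B : Fin NN → Matrix (Fin n) (Fin m) ℝ)
    (C : Fin NN → Matrix (Fin ℓ) (Fin n) ℝ) (D : Fin NN → Matrix (Fin ℓ) (Fin m) ℝ)
    (E : Fin NN → Matrix (Fin n) (Fin q) ℝ)
    (γ₀ : ℝ) (hγ₀ : 0 < γ₀)
    (H X : XT NN MM T → Matrix (Fin n) (Fin n) ℝ)
    (Z : XT NN MM T → XT NN MM T → Matrix (Fin n) (Fin n) ℝ)
    (G : Fin NN → Fin T → Matrix (Fin n) (Fin n) ℝ)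
    (F : Fin NN → Fin T → Matrix (Fin m) (Fin n) ℝ)
    (hLMI1 : ∀ χ : XT NN MM T, inX f χ →
      (hinfBlock γ₀ (G χ.2.2.1 χ.2.2.2 + (G χ.2.2.1 χ.2.2.2)ᵀ - X χ)
        (H χ + (H χ)ᵀ - Fop P Qm f Z χ)
        (A χ.1 * G χ.2.2.1 χ.2.2.2 + B χ.1 * F χ.2.2.1 χ.2.2.2)
        (E χ.1)
        (C χ.1 * G χ.2.2.1 χ.2.2.2 + D χ.1 * F χ.2.2.1 χ.2.2.2)).PosDef)
    (hLMI2 : ∀ χ χ' : XT NN MM T, inX f χ → inX f χ' →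
      (Matrix.fromBlocks (Z χ χ') (H χ)ᵀ (H χ) (X χ')).PosDef) :
    (∀ g d, Admissible f g d → IsUnit (G g d)) ∧
    ∀ K : Fin NN → Fin T → Matrix (Fin m) (Fin n) ℝ,
      (∀ g d, Admissible f g d → K g d = F g d * (G g d)⁻¹) →
      ∃ ε c₀ c₁ : ℝ, 0 < ε ∧ ε ≤ γ₀ ∧ 0 < c₀ ∧ ε ≤ c₁ ∧
        ∀ χ : XT NN MM T, inX f χ →
          (∀ x, c₀ * (x ⬝ᵥ x) ≤ Vfun X χ x) ∧ (∀ x, Vfun X χ x ≤ c₁ * (x ⬝ᵥ x)) ∧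
          ∀ x w, (∑ c : Fin NN × Fin MM, P χ.1 c.1 * Qm χ.2.1 c.2 *
              Vfun X (stepX f χ c) (AKmat A B K χ *ᵥ x + E χ.1 *ᵥ w))
            + (CKmat C D K χ *ᵥ x) ⬝ᵥ (CKmat C D K χ *ᵥ x)
            + ε * (x ⬝ᵥ x + w ⬝ᵥ w) ≤ Vfun X χ x + γ₀ * (w ⬝ᵥ w) := by
  classical
  have hX : ∀ χ, inX f χ → (X χ).PosDef := fun χ hχ => (aux_block2 (hLMI2 χ χ hχ hχ)).1
  have hGu : ∀ χ : XT NN MM T, inX f χ → IsUnit (G χ.2.2.1 χ.2.2.2) := by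
    intro χ hχ
    apply aux_G_unit (hX χ hχ)
    intro u hu
    have := aux_block_pos (hLMI1 χ hχ) u 0 0 0 (Or.inl hu)
    simpa using this
  refine ⟨?_, ?_⟩
  · rintro g d ⟨α, β, h⟩
    exact hGu _ h
  intro K hK
  have hlow : ∃ c₀, 0 < c₀ ∧ ∀ χ : XT NN MM T, inX f χ → ∀ x, c₀ * (x ⬝ᵥ x) ≤ Vfun X χ x := by
    apply aux_unif (fun (χ : XT NN MM T) c₀ => inX f χ → ∀ x, c₀ * (x ⬝ᵥ x) ≤ Vfun X χ x)
    · intro χ a b hb hab h hχ x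
      have := h hχ x
      have := mul_le_mul_of_nonneg_right hab (aux_dot_nonneg x)
      linarith
    · intro χ
      by_cases hχ : inX f χ
      · obtain ⟨e, he, h⟩ := aux_quad_lower (fun x => Vfun X χ x) (aux_quad_cont _)
          (aux_quad_hom _) (fun x hx => by simpa [Vfun] using (hX χ hχ).inv.dotProduct_mulVec_pos hx)
        exact ⟨e, he, fun _ => h⟩
      · exact ⟨1, one_pos, fun h => (hχ h).elim⟩
  have hup : ∃ c₁, 0 < c₁ ∧ ∀ χ : XT NN MM T, ∀ x, Vfun X χ x ≤ c₁ * (x ⬝ᵥ x) := by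
    apply aux_unif_up (fun (χ : XT NN MM T) c₁ => ∀ x, Vfun X χ x ≤ c₁ * (x ⬝ᵥ x))
    · intro χ a b hab h x
      have := h x
      have := mul_le_mul_of_nonneg_right hab (aux_dot_nonneg x)
      linarith
    · intro χ
      exact aux_quad_upper (fun x => Vfun X χ x) (aux_quad_cont _) (aux_quad_hom _)
  have hdiss : ∃ ε, 0 < ε ∧ ∀ χ : XT NN MM T, inX f χ → ∀ x w,
      (∑ c : Fin NN × Fin MM, P χ.1 c.1 * Qm χ.2.1 c.2 *
              Vfun X (stepX f χ c) (AKmat A B K χ *ᵥ x + E χ.1 *ᵥ w))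
            + (CKmat C D K χ *ᵥ x) ⬝ᵥ (CKmat C D K χ *ᵥ x)
            + ε * (x ⬝ᵥ x + w ⬝ᵥ w) ≤ Vfun X χ x + γ₀ * (w ⬝ᵥ w) := by
    apply aux_unif (fun (χ : XT NN MM T) ε => inX f χ → ∀ x w,
      (∑ c : Fin NN × Fin MM, P χ.1 c.1 * Qm χ.2.1 c.2 *
              Vfun X (stepX f χ c) (AKmat A B K χ *ᵥ x + E χ.1 *ᵥ w))
            + (CKmat C D K χ *ᵥ x) ⬝ᵥ (CKmat C D K χ *ᵥ x)
            + ε * (x ⬝ᵥ x + w ⬝ᵥ w) ≤ Vfun X χ x + γ₀ * (w ⬝ᵥ w))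
    · intro χ a b hb hab h hχ x w
      have := h hχ x w
      have := mul_le_mul_of_nonneg_right hab (add_nonneg (aux_dot_nonneg x) (aux_dot_nonneg w))
      linarith
    · intro χ
      by_cases hχ : inX f χ
      swap
      · exact ⟨1, one_pos, fun h => (hχ h).elim⟩
      set Y := Fop P Qm f (fun _ χ' => (X χ')⁻¹) χ with hYdef
      have hYq : ∀ a, a ⬝ᵥ (Y *ᵥ a) = ∑ c : Fin NN × Fin MM, P χ.1 c.1 * Qm χ.2.1 c.2 *
          Vfun X (stepX f χ c) a := by
        intro a
        rw [hYdef, aux_Fop_quad]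
        exact aux_sum_step P Qm f χ (fun χ' => Vfun X χ' a)
      have hY : Y.PosSemidef := by
        rw [hYdef]
        unfold Fop
        apply Matrix.posSemidef_sum
        intro χ' _
        split_ifs with h
        · exact (hX χ' h).inv.posSemidef.smul (aux_pbar_nonneg hP0 hQ0 f χ χ')
        · exact Matrix.PosSemidef.zero
      have hFz : ∀ v, (H χ *ᵥ v) ⬝ᵥ (Y *ᵥ (H χ *ᵥ v)) ≤ v ⬝ᵥ (Fop P Qm f Z χ *ᵥ v) := by
        intro v
        rw [hYdef, aux_Fop_quad, aux_Fop_quad]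
        apply Finset.sum_le_sum
        intro χ' _
        split_ifs with h
        · exact mul_le_mul_of_nonneg_left ((aux_block2 (hLMI2 χ χ' hχ h)).2 v)
            (aux_pbar_nonneg hP0 hQ0 f χ χ')
        · exact le_rfl
      have hpos := aux_diss (hLMI1 χ hχ) (hX χ hχ) (hGu χ hχ)
        (hK _ _ ⟨χ.1, χ.2.1, hχ⟩) hY hFz
      obtain ⟨e, he, h⟩ := aux_quad_lower (ι := Fin n ⊕ Fin q) (fun y =>
          (y ∘ Sum.inl) ⬝ᵥ ((X χ)⁻¹ *ᵥ (y ∘ Sum.inl)) + γ₀ * ((y ∘ Sum.inr) ⬝ᵥ (y ∘ Sum.inr))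
          - (AKmat A B K χ *ᵥ (y ∘ Sum.inl) + E χ.1 *ᵥ (y ∘ Sum.inr)) ⬝ᵥ
              (Y *ᵥ (AKmat A B K χ *ᵥ (y ∘ Sum.inl) + E χ.1 *ᵥ (y ∘ Sum.inr)))
          - (CKmat C D K χ *ᵥ (y ∘ Sum.inl)) ⬝ᵥ (CKmat C D K χ *ᵥ (y ∘ Sum.inl)))
          (by
            have c1 : Continuous fun y : Fin n ⊕ Fin q → ℝ => y ∘ Sum.inl := by
              apply continuous_pi; intro i; exact continuous_apply _
            have c2 : Continuous fun y : Fin n ⊕ Fin q → ℝ => y ∘ Sum.inr := by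
              apply continuous_pi; intro i; exact continuous_apply _
            fun_prop)
          (by
            intro c y
            have e1 : (c • y) ∘ Sum.inl = c • (y ∘ (Sum.inl : Fin n → Fin n ⊕ Fin q)) := rfl
            have e2 : (c • y) ∘ Sum.inr = c • (y ∘ (Sum.inr : Fin q → Fin n ⊕ Fin q)) := rfl
            simp only [e1, e2, mulVec_smul, ← smul_add, smul_dotProduct, dotProduct_smul,
              smul_eq_mul]
            ring)
          (by
            intro y hy
            apply hpos
            by_contra hcon
            push Not at hcon
            apply hy
            funext i
            rcases i with i | i
            · exact congrFun hcon.1 i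
            · exact congrFun hcon.2 i)
      refine ⟨e, he, fun _ x w => ?_⟩
      have := h (Sum.elim x w)
      simp only [Sum.elim_comp_inl, Sum.elim_comp_inr, sumElim_dotProduct_sumElim] at this
      rw [← hYq]
      unfold Vfun
      linarith
  obtain ⟨c₀, hc₀, h0⟩ := hlow
  obtain ⟨c₁, hc₁, h1⟩ := hup
  obtain ⟨ε, hε, h2⟩ := hdiss
  refine ⟨min ε γ₀, c₀, c₁ + ε, by positivity, min_le_right _ _, hc₀,
    (min_le_left _ _).trans (by linarith), fun χ hχ => ⟨h0 χ hχ, fun x => ?_, fun x w => ?_⟩⟩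
  · have := h1 χ x
    have := mul_nonneg hε.le (aux_dot_nonneg x)
    linarith
  · have := h2 χ hχ x w
    have := mul_le_mul_of_nonneg_right (min_le_left ε γ₀)
      (add_nonneg (aux_dot_nonneg x) (aux_dot_nonneg w))
    linarith

theorem rbar_step {Ω : Type} {NN MM T : ℕ} [NeZero T] (r : ℕ → Ω → Fin NN)
    (s : ℕ → Ω → Fin MM) (f : Fin MM → Bool) (τ₀ : ℤ) (σ₀ : Fin NN) (k : ℕ) (ω : Ω) :
    (rbarProc r s f τ₀ σ₀ (k + 1) ω : XT NN MM T)
      = stepX f (rbarProc r s f τ₀ σ₀ k ω) (r (k + 1) ω, s (k + 1) ω) := by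
  classical
  by_cases h : f (s (k + 1) ω) = true
  · have hex : ∃ j ≤ k + 1, f (s j ω) = true := ⟨k + 1, le_rfl, h⟩
    have hfg : Nat.findGreatest (fun j => f (s j ω) = true) (k + 1) = k + 1 :=
      Nat.findGreatest_eq h
    simp only [rbarProc, stepX, h, if_true, sigmaProc, rhoProc, tauZ, if_pos hex, hfg]
    simp [intToFin]
  · have hfg : Nat.findGreatest (fun j => f (s j ω) = true) (k + 1)
        = Nat.findGreatest (fun j => f (s j ω) = true) k :=
      Nat.findGreatest_of_not h
    have hex : (∃ j ≤ k + 1, f (s j ω) = true) ↔ ∃ j ≤ k, f (s j ω) = true := by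
      constructor
      · rintro ⟨j, hj, hf⟩
        refine ⟨j, ?_, hf⟩
        rcases Nat.lt_or_ge k j with h1 | h1
        · have : j = k + 1 := by omega
          subst this; exact (h hf).elim
        · exact h1
      · rintro ⟨j, hj, hf⟩
        exact ⟨j, by omega, hf⟩
    have htau : tauZ s f τ₀ (k + 1) ω = tauZ s f τ₀ k ω := by
      simp only [tauZ, hex, hfg]
    have hsig : sigmaProc r s f σ₀ (k + 1) ω = sigmaProc r s f σ₀ k ω := by
      simp only [sigmaProc, hex, hfg]
    have hrho : (rhoProc s f τ₀ (k + 1) ω : Fin T) = rhoProc s f τ₀ k ω + 1 := by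
      simp only [rhoProc, htau]
      generalize tauZ s f τ₀ k ω = t
      apply Fin.ext
      have hT : 0 < (T : ℤ) := by exact_mod_cast Nat.pos_of_ne_zero (NeZero.ne T)
      rw [Fin.val_add]
      simp only [intToFin, Fin.val_one']
      rw [Nat.add_mod_mod]
      zify
      rw [Int.toNat_of_nonneg (Int.emod_nonneg _ hT.ne'),
        Int.toNat_of_nonneg (Int.emod_nonneg _ hT.ne'), Int.emod_add_emod]
      congr 1
      push_cast
      ring
    simp only [rbarProc, stepX, h, hsig, hrho]
    simp

theorem rbar_inX {Ω : Type} {NN MM T : ℕ} [NeZero T] (r : ℕ → Ω → Fin NN)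
    (s : ℕ → Ω → Fin MM) (f : Fin MM → Bool) (τ₀ : ℤ) (σ₀ : Fin NN) (k : ℕ) (ω : Ω) :
    inX f (rbarProc r s f τ₀ σ₀ k ω : XT NN MM T) := by
  classical
  cases k with
  | succ k => rw [rbar_step]; exact stepX_inX _ _ _
  | zero =>
    intro h
    have h' : f (s 0 ω) = true := h
    have hex : ∃ j ≤ 0, f (s j ω) = true := ⟨0, le_rfl, h'⟩
    simp [rbarProc, sigmaProc, rhoProc, tauZ, h', intToFin]

/-- Two outcomes have the same path up to time `k`. -/
def SamePath {NN MM : ℕ} {P : Matrix (Fin NN) (Fin NN) ℝ} {Q : Matrix (Fin MM) (Fin MM) ℝ}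
    (S : MJLSReal NN MM P Q) (k : ℕ) (ω ω' : S.Ω) : Prop :=
  ∀ l ≤ k, S.r l ω = S.r l ω' ∧ S.s l ω = S.s l ω'

/-- The path map. -/
def pathMap {NN MM : ℕ} {P : Matrix (Fin NN) (Fin NN) ℝ} {Q : Matrix (Fin MM) (Fin MM) ℝ}
    (S : MJLSReal NN MM P Q) (k : ℕ) (ω : S.Ω) : Fin (k + 1) → Fin NN × Fin MM :=
  fun l => (S.r l ω, S.s l ω)

theorem pathMap_eq_iff {NN MM : ℕ} {P : Matrix (Fin NN) (Fin NN) ℝ}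
    {Q : Matrix (Fin MM) (Fin MM) ℝ}
    (S : MJLSReal NN MM P Q) (k : ℕ) (ω ω' : S.Ω) :
    pathMap S k ω = pathMap S k ω' ↔ SamePath S k ω ω' := by
  constructor
  · intro h l hl
    have := congrFun h ⟨l, by omega⟩
    simpa [pathMap] using this
  · intro h
    funext l
    have := h l (by omega)
    simp [pathMap, this]

theorem pathMap_meas {NN MM : ℕ} {P : Matrix (Fin NN) (Fin NN) ℝ}
    {Q : Matrix (Fin MM) (Fin MM) ℝ}
    (S : MJLSReal NN MM P Q) (k : ℕ) : Measurable[S.inst] (pathMap S k) := by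
  let := S.inst
  apply measurable_pi_lambda
  intro l
  exact (S.meas_r l).prodMk (S.meas_s l)

theorem aux_meas_of_samePath {NN MM : ℕ} {P : Matrix (Fin NN) (Fin NN) ℝ}
    {Q : Matrix (Fin MM) (Fin MM) ℝ}
    (S : MJLSReal NN MM P Q) (k : ℕ) {β : Type} [MeasurableSpace β] [Nonempty β] (g : S.Ω → β)
    (hg : ∀ ω ω', SamePath S k ω ω' → g ω = g ω') : Measurable[S.inst] g := by
  let := S.inst
  have hf : g.FactorsThrough (pathMap S k) := fun ω ω' h => hg _ _ ((pathMap_eq_iff S k ω ω').mp h)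
  have : g = Function.extend (pathMap S k) g (fun _ => Classical.arbitrary β) ∘ pathMap S k := by
    funext ω
    exact (hf.extend_apply _ _).symm
  rw [this]
  exact (measurable_of_finite _).comp (pathMap_meas S k)

theorem aux_joint {NN MM : ℕ} {P : Matrix (Fin NN) (Fin NN) ℝ}
    {Q : Matrix (Fin MM) (Fin MM) ℝ} (hP0 : ∀ i j, 0 ≤ P i j) (hQ0 : ∀ i j, 0 ≤ Q i j)
    (S : MJLSReal NN MM P Q) (k : ℕ) (p : Fin (k + 1) → Fin NN × Fin MM) (c : Fin NN × Fin MM) :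
    S.μ {ω | pathMap S k ω = p ∧ (S.r (k + 1) ω, S.s (k + 1) ω) = c}
      = ENNReal.ofReal (P (p (Fin.last k)).1 c.1 * Q (p (Fin.last k)).2 c.2)
        * S.μ {ω | pathMap S k ω = p} := by
  let := S.inst
  have := S.prob
  set i : ℕ → Fin NN := fun l => (p (Fin.ofNat (k + 1) l)).1 with hi
  set j : ℕ → Fin MM := fun l => (p (Fin.ofNat (k + 1) l)).2 with hj
  have hlast : Fin.ofNat (k + 1) k = Fin.last k := by
    apply Fin.ext; simp [Fin.ofNat]
  have hpath : ∀ ω, pathMap S k ω = p ↔ (∀ l ≤ k, S.r l ω = i l) ∧ (∀ l ≤ k, S.s l ω = j l) := by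
    intro ω
    have hof : ∀ l (h : l < k + 1), Fin.ofNat (k + 1) l = ⟨l, h⟩ := by
      intro l h
      apply Fin.ext; simp [Fin.ofNat, Nat.mod_eq_of_lt h]
    constructor
    · intro h
      refine ⟨fun l hl => ?_, fun l hl => ?_⟩
      · simp only [hi, hof l (by omega), ← h, pathMap]
      · simp only [hj, hof l (by omega), ← h, pathMap]
    · rintro ⟨h1, h2⟩
      funext l
      have e := hof l.1 l.2
      have a1 := h1 l.1 (by omega)
      have a2 := h2 l.1 (by omega)
      simp only [hi, hj, e] at a1 a2
      exact Prod.ext a1 a2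
  have hmr := S.markov_r k c.1 i
  have hms := S.markov_s k c.2 j
  have hind := S.indep.measure_inter_preimage_eq_mul
  -- measurability of path events
  have mR : MeasurableSet {x : ℕ → Fin NN | ∀ l ≤ k, x l = i l} := by
    simp only [Set.ofPred_forall]
    exact MeasurableSet.iInter fun l => MeasurableSet.iInter fun _ =>
      measurableSet_eq_fun (measurable_pi_apply l) measurable_const
  have mS : MeasurableSet {x : ℕ → Fin MM | ∀ l ≤ k, x l = j l} := by
    simp only [Set.ofPred_forall]
    exact MeasurableSet.iInter fun l => MeasurableSet.iInter fun _ =>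
      measurableSet_eq_fun (measurable_pi_apply l) measurable_const
  have mR' : MeasurableSet {x : ℕ → Fin NN | x (k + 1) = c.1 ∧ ∀ l ≤ k, x l = i l} :=
    MeasurableSet.inter
      (measurableSet_eq_fun (measurable_pi_apply (k + 1)) measurable_const) mR
  have mS' : MeasurableSet {x : ℕ → Fin MM | x (k + 1) = c.2 ∧ ∀ l ≤ k, x l = j l} :=
    MeasurableSet.inter
      (measurableSet_eq_fun (measurable_pi_apply (k + 1)) measurable_const) mS
  have I1 := hind _ _ mR mS
  have I2 := hind _ _ mR' mS'
  have E1 : {ω | pathMap S k ω = p} = (fun ω l => S.r l ω) ⁻¹' {x | ∀ l ≤ k, x l = i l}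
      ∩ (fun ω l => S.s l ω) ⁻¹' {x | ∀ l ≤ k, x l = j l} := by
    ext ω; simp only [Set.mem_ofPred_eq, hpath, Set.mem_inter_iff, Set.mem_preimage]
  have E2 : {ω | pathMap S k ω = p ∧ (S.r (k + 1) ω, S.s (k + 1) ω) = c}
      = (fun ω l => S.r l ω) ⁻¹' {x | x (k + 1) = c.1 ∧ ∀ l ≤ k, x l = i l}
      ∩ (fun ω l => S.s l ω) ⁻¹' {x | x (k + 1) = c.2 ∧ ∀ l ≤ k, x l = j l} := by
    ext ω
    simp only [Set.mem_ofPred_eq, hpath, Set.mem_inter_iff, Set.mem_preimage, Prod.ext_iff]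
    tauto
  rw [E1, E2, I1, I2]
  have R1 : S.μ ((fun ω l => S.r l ω) ⁻¹' {x | x (k + 1) = c.1 ∧ ∀ l ≤ k, x l = i l})
      = ENNReal.ofReal (P (p (Fin.last k)).1 c.1)
        * S.μ ((fun ω l => S.r l ω) ⁻¹' {x | ∀ l ≤ k, x l = i l}) := by
    rw [← ENNReal.toReal_eq_toReal_iff' (measure_ne_top _ _)
      (ENNReal.mul_ne_top ENNReal.ofReal_ne_top (measure_ne_top _ _)), ENNReal.toReal_mul,
      ENNReal.toReal_ofReal (hP0 _ _)]
    simp only [hi, hlast] at hmr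
    exact hmr
  have R2 : S.μ ((fun ω l => S.s l ω) ⁻¹' {x | x (k + 1) = c.2 ∧ ∀ l ≤ k, x l = j l})
      = ENNReal.ofReal (Q (p (Fin.last k)).2 c.2)
        * S.μ ((fun ω l => S.s l ω) ⁻¹' {x | ∀ l ≤ k, x l = j l}) := by
    rw [← ENNReal.toReal_eq_toReal_iff' (measure_ne_top _ _)
      (ENNReal.mul_ne_top ENNReal.ofReal_ne_top (measure_ne_top _ _)), ENNReal.toReal_mul,
      ENNReal.toReal_ofReal (hQ0 _ _)]
    simp only [hj, hlast] at hms
    exact hms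
  rw [R1, R2, ENNReal.ofReal_mul (hP0 _ _)]
  ring

/-- Conditional expectation of a function of the past and of the next state. -/
theorem aux_condexp {NN MM : ℕ} {P : Matrix (Fin NN) (Fin NN) ℝ}
    {Q : Matrix (Fin MM) (Fin MM) ℝ} (hP0 : ∀ i j, 0 ≤ P i j) (hQ0 : ∀ i j, 0 ≤ Q i j)
    (S : MJLSReal NN MM P Q) (k : ℕ) (Ψ : S.Ω → Fin NN × Fin MM → ENNReal)
    (hΨ : ∀ ω ω', SamePath S k ω ω' → Ψ ω = Ψ ω') :
    @lintegral _ S.inst S.μ (fun ω => Ψ ω (S.r (k + 1) ω, S.s (k + 1) ω))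
      = @lintegral _ S.inst S.μ (fun ω => ∑ c : Fin NN × Fin MM,
          ENNReal.ofReal (P (S.r k ω) c.1 * Q (S.s k ω) c.2) * Ψ ω c) := by
  let := S.inst
  have := S.prob
  have hf : Ψ.FactorsThrough (pathMap S k) := fun ω ω' h => hΨ _ _ ((pathMap_eq_iff S k ω ω').mp h)
  set Φ := Function.extend (pathMap S k) Ψ 0 with hΦ
  have hΨΦ : ∀ ω, Ψ ω = Φ (pathMap S k ω) := fun ω => (hf.extend_apply _ _).symm
  have m1 : Measurable fun ω => (pathMap S k ω, (S.r (k + 1) ω, S.s (k + 1) ω)) :=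
    (pathMap_meas S k).prodMk ((S.meas_r _).prodMk (S.meas_s _))
  have e1 : (∫⁻ ω, Ψ ω (S.r (k + 1) ω, S.s (k + 1) ω) ∂S.μ)
      = ∫⁻ y, Φ y.1 y.2 ∂(S.μ.map fun ω => (pathMap S k ω, (S.r (k + 1) ω, S.s (k + 1) ω))) := by
    rw [lintegral_map (measurable_of_finite _) m1]
    simp only [hΨΦ]
  have e2 : (∫⁻ ω, ∑ c : Fin NN × Fin MM,
          ENNReal.ofReal (P (S.r k ω) c.1 * Q (S.s k ω) c.2) * Ψ ω c ∂S.μ)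
      = ∫⁻ y, ∑ c : Fin NN × Fin MM, ENNReal.ofReal (P (y (Fin.last k)).1 c.1 *
          Q (y (Fin.last k)).2 c.2) * Φ y c ∂(S.μ.map (pathMap S k)) := by
    rw [lintegral_map (measurable_of_finite _) (pathMap_meas S k)]
    simp only [hΨΦ]
    rfl
  rw [e1, e2, lintegral_fintype, lintegral_fintype, Fintype.sum_prod_type]
  refine Finset.sum_congr rfl fun p _ => ?_
  rw [Finset.sum_mul]
  refine Finset.sum_congr rfl fun c _ => ?_
  rw [Measure.map_apply m1 (measurableSet_singleton _),
    Measure.map_apply (pathMap_meas S k) (measurableSet_singleton _)]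
  have := aux_joint hP0 hQ0 S k p c
  have E1 : (fun ω => (pathMap S k ω, (S.r (k + 1) ω, S.s (k + 1) ω))) ⁻¹' {(p, c)}
      = {ω | pathMap S k ω = p ∧ (S.r (k + 1) ω, S.s (k + 1) ω) = c} := by
    ext ω; simp [Prod.ext_iff]
  have E2 : pathMap S k ⁻¹' {p} = {ω | pathMap S k ω = p} := rfl
  rw [E1, E2, this]
  ring

theorem rbar_samePath {NN MM T : ℕ} [NeZero T] {P : Matrix (Fin NN) (Fin NN) ℝ}
    {Q : Matrix (Fin MM) (Fin MM) ℝ} (S : MJLSReal NN MM P Q) (f : Fin MM → Bool) (τ₀ : ℤ)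
    (σ₀ : Fin NN) (k : ℕ) (ω ω' : S.Ω) (h : SamePath S k ω ω') :
    (rbarProc S.r S.s f τ₀ σ₀ k ω : XT NN MM T) = rbarProc S.r S.s f τ₀ σ₀ k ω' := by
  classical
  induction k with
  | zero =>
    have h0 := h 0 le_rfl
    simp [rbarProc, sigmaProc, rhoProc, tauZ, h0.1, h0.2]
  | succ k ih =>
    have h1 := h (k + 1) le_rfl
    rw [rbar_step, rbar_step, ih (fun l hl => h l (by omega)), h1.1, h1.2]

theorem traj_samePath {NN MM T n q : ℕ} [NeZero T] {P : Matrix (Fin NN) (Fin NN) ℝ}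
    {Q : Matrix (Fin MM) (Fin MM) ℝ} (S : MJLSReal NN MM P Q) (f : Fin MM → Bool) (τ₀ : ℤ)
    (σ₀ : Fin NN) (Am : XT NN MM T → Matrix (Fin n) (Fin n) ℝ)
    (Em : XT NN MM T → Matrix (Fin n) (Fin q) ℝ) (w : ℕ → S.Ω → Fin q → ℝ)
    (hw : ∀ k ω ω', SamePath S k ω ω' → w k ω = w k ω') (x0 : Fin n → ℝ)
    (k : ℕ) (ω ω' : S.Ω) (h : SamePath S k ω ω') :
    traj Am Em (rbarProc S.r S.s f τ₀ σ₀) w x0 k ω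
      = traj Am Em (rbarProc S.r S.s f τ₀ σ₀) w x0 k ω' := by
  induction k with
  | zero => rfl
  | succ k ih =>
    have h1 : SamePath S k ω ω' := fun l hl => h l (by omega)
    simp only [traj]
    rw [ih h1, rbar_samePath S f τ₀ σ₀ k ω ω' h1, hw k ω ω' h1]

theorem adapted_samePath {NN MM q : ℕ} {P : Matrix (Fin NN) (Fin NN) ℝ}
    {Q : Matrix (Fin MM) (Fin MM) ℝ} (S : MJLSReal NN MM P Q) (k : ℕ) (w : S.Ω → Fin q → ℝ)
    (hw : Measurable[sigFiltSigma S k] w) (ω ω' : S.Ω) (h : SamePath S k ω ω') :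
    w ω = w ω' := by
  have hle : sigFiltSigma S k ≤ MeasurableSpace.comap (pathMap S k) ⊤ := by
    unfold sigFiltSigma
    refine iSup₂_le fun l hl => sup_le ?_ ?_
    · rintro _ ⟨U, _, rfl⟩
      refine ⟨{p | (p ⟨l, by simpa using hl⟩).1 ∈ U}, trivial, ?_⟩
      ext; rfl
    · rintro _ ⟨U, _, rfl⟩
      refine ⟨{p | (p ⟨l, by simpa using hl⟩).2 ∈ U}, trivial, ?_⟩
      ext; rfl
  obtain ⟨U, _, hU⟩ := hle _ (hw (measurableSet_singleton (w ω)))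
  have h1 : ω ∈ pathMap S k ⁻¹' U := by rw [hU]; rfl
  have h2 : ω' ∈ pathMap S k ⁻¹' U := by
    have := (pathMap_eq_iff S k ω ω').mpr h
    simpa only [Set.mem_preimage, ← this] using h1
  rw [hU] at h2
  exact h2.symm

theorem sqE_eq {d : ℕ} (v : Fin d → ℝ) : sqE v = ENNReal.ofReal (v ⬝ᵥ v) := by
  simp [sqE, dotProduct, sq]

/-- Conditional expectation of the storage function at the next time. -/
theorem aux_V_step {NN MM T n q : ℕ} [NeZero T] {P : Matrix (Fin NN) (Fin NN) ℝ}
    {Q : Matrix (Fin MM) (Fin MM) ℝ} (hP0 : ∀ i j, 0 ≤ P i j) (hQ0 : ∀ i j, 0 ≤ Q i j)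
    (S : MJLSReal NN MM P Q) (f : Fin MM → Bool) (τ₀ : ℤ)
    (σ₀ : Fin NN) (Am : XT NN MM T → Matrix (Fin n) (Fin n) ℝ)
    (Em : XT NN MM T → Matrix (Fin n) (Fin q) ℝ) (w : ℕ → S.Ω → Fin q → ℝ)
    (hw : ∀ k ω ω', SamePath S k ω ω' → w k ω = w k ω') (x0 : Fin n → ℝ)
    (V : XT NN MM T → (Fin n → ℝ) → ℝ) (hV : ∀ χ, inX f χ → ∀ x, 0 ≤ V χ x) (k : ℕ) :
    @lintegral _ S.inst S.μ (fun ω => ENNReal.ofReal (V (rbarProc S.r S.s f τ₀ σ₀ (k + 1) ω)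
        (traj Am Em (rbarProc S.r S.s f τ₀ σ₀) w x0 (k + 1) ω)))
      = @lintegral _ S.inst S.μ (fun ω => ENNReal.ofReal (∑ c : Fin NN × Fin MM,
          P (rbarProc (T := T) S.r S.s f τ₀ σ₀ k ω).1 c.1
            * Q (rbarProc (T := T) S.r S.s f τ₀ σ₀ k ω).2.1 c.2
            * V (stepX f (rbarProc S.r S.s f τ₀ σ₀ k ω) c)
              (Am (rbarProc S.r S.s f τ₀ σ₀ k ω)
                *ᵥ (traj Am Em (rbarProc S.r S.s f τ₀ σ₀) w x0 k ω)
                + Em (rbarProc S.r S.s f τ₀ σ₀ k ω) *ᵥ (w k ω)))) := by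
  have key := aux_condexp hP0 hQ0 S k (fun ω c => ENNReal.ofReal
    (V (stepX f (rbarProc S.r S.s f τ₀ σ₀ k ω) c)
              (Am (rbarProc S.r S.s f τ₀ σ₀ k ω)
                *ᵥ (traj Am Em (rbarProc S.r S.s f τ₀ σ₀) w x0 k ω)
                + Em (rbarProc S.r S.s f τ₀ σ₀ k ω) *ᵥ (w k ω)))) (by
      intro ω ω' h
      simp only [rbar_samePath S f τ₀ σ₀ k ω ω' h, hw k ω ω' h,
        traj_samePath S f τ₀ σ₀ Am Em w hw x0 k ω ω' h])
  have e1 : ∀ ω, V (rbarProc S.r S.s f τ₀ σ₀ (k + 1) ω)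
        (traj Am Em (rbarProc S.r S.s f τ₀ σ₀) w x0 (k + 1) ω)
      = V (stepX f (rbarProc S.r S.s f τ₀ σ₀ k ω) (S.r (k + 1) ω, S.s (k + 1) ω))
              (Am (rbarProc S.r S.s f τ₀ σ₀ k ω)
                *ᵥ (traj Am Em (rbarProc S.r S.s f τ₀ σ₀) w x0 k ω)
                + Em (rbarProc S.r S.s f τ₀ σ₀ k ω) *ᵥ (w k ω)) := by
    intro ω
    rw [rbar_step]; rfl
  simp only [e1]
  rw [key]
  congr 1
  funext ω
  rw [ENNReal.ofReal_sum_of_nonneg]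
  · refine Finset.sum_congr rfl fun c _ => ?_
    rw [ENNReal.ofReal_mul (mul_nonneg (hP0 _ _) (hQ0 _ _))]
    rfl
  · intro c _
    exact mul_nonneg (mul_nonneg (hP0 _ _) (hQ0 _ _)) (hV _ (stepX_inX _ _ _) _)

theorem aux_stable {NN MM T n m q : ℕ} [NeZero T] {P : Matrix (Fin NN) (Fin NN) ℝ}
    {Qm : Matrix (Fin MM) (Fin MM) ℝ} (hP0 : ∀ i j, 0 ≤ P i j) (hQ0 : ∀ i j, 0 ≤ Qm i j)
    (f : Fin MM → Bool)
    (A : Fin NN → Matrix (Fin n) (Fin n) ℝ) (B : Fin NN → Matrix (Fin n) (Fin m) ℝ)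
    (E : Fin NN → Matrix (Fin n) (Fin q) ℝ)
    (K : Fin NN → Fin T → Matrix (Fin m) (Fin n) ℝ)
    (V : XT NN MM T → (Fin n → ℝ) → ℝ) (ε c₀ c₁ : ℝ) (hε : 0 < ε) (hc₀ : 0 < c₀) (hc₁ : ε ≤ c₁)
    (hlow : ∀ χ, inX f χ → ∀ x, c₀ * (x ⬝ᵥ x) ≤ V χ x)
    (hup : ∀ χ, inX f χ → ∀ x, V χ x ≤ c₁ * (x ⬝ᵥ x))
    (hdec : ∀ χ, inX f χ → ∀ x, (∑ c : Fin NN × Fin MM, P χ.1 c.1 * Qm χ.2.1 c.2 *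
              V (stepX f χ c) (AKmat A B K χ *ᵥ x)) + ε * (x ⬝ᵥ x) ≤ V χ x) :
    MeanSquareStable P Qm f A B E K := by
  have hc₁p : 0 < c₁ := hε.trans_le hc₁
  have hlam : 0 ≤ 1 - ε / c₁ := by
    rw [sub_nonneg, div_le_one hc₁p]; exact hc₁
  refine ⟨c₁ / c₀, by positivity, 1 - ε / c₁, hlam, by linarith [div_pos hε hc₁p], ?_⟩
  intro S τ₀ _ σ₀ r₀ s₀ _ x0 k
  let _ := S.inst
  have _ := S.prob
  have hV : ∀ χ, inX f χ → ∀ x, 0 ≤ V χ x := fun χ hχ x =>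
    (mul_nonneg hc₀.le (aux_dot_nonneg x)).trans (hlow χ hχ x)
  have hin := rbar_inX (T := T) S.r S.s f τ₀ σ₀
  set rb : ℕ → S.Ω → XT NN MM T := rbarProc S.r S.s f τ₀ σ₀ with hrb
  set x := traj (AKmat A B K) (fun χ => E χ.1) rb (fun _ _ => 0) x0 with hx
  have main : ∀ k, (∫⁻ ω, ENNReal.ofReal (V (rb k ω) (x k ω)) ∂S.μ)
      ≤ ENNReal.ofReal ((1 - ε / c₁) ^ k * (c₁ * (x0 ⬝ᵥ x0))) := by
    intro k
    induction k with
    | zero =>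
      calc (∫⁻ ω, ENNReal.ofReal (V (rb 0 ω) (x 0 ω)) ∂S.μ)
          ≤ ∫⁻ ω, ENNReal.ofReal (c₁ * (x0 ⬝ᵥ x0)) ∂S.μ := by
            apply lintegral_mono
            intro ω
            exact ENNReal.ofReal_le_ofReal (hup _ (hin 0 ω) _)
        _ = _ := by simp
    | succ k ih =>
      rw [hx, hrb, aux_V_step hP0 hQ0 S f τ₀ σ₀ _ _ _ (fun _ _ _ _ => rfl) x0 V hV k, ← hrb, ← hx]
      calc _ ≤ ∫⁻ ω, ENNReal.ofReal (1 - ε / c₁) * ENNReal.ofReal (V (rb k ω) (x k ω)) ∂S.μ := by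
            apply lintegral_mono
            intro ω
            dsimp only
            rw [← ENNReal.ofReal_mul hlam]
            apply ENNReal.ofReal_le_ofReal
            have h1 := hdec _ (hin k ω) (x k ω)
            have h2 := hup _ (hin k ω) (x k ω)
            have h3 : ε / c₁ * V (rb k ω) (x k ω) ≤ ε * (x k ω ⬝ᵥ x k ω) := by
              calc ε / c₁ * V (rb k ω) (x k ω) ≤ ε / c₁ * (c₁ * (x k ω ⬝ᵥ x k ω)) := by
                    gcongr
                _ = _ := by field_simp
            simp only [mulVec_zero, add_zero, Pi.zero_def] at h1 ⊢
            have e0 : ∀ M : Matrix (Fin n) (Fin q) ℝ, M *ᵥ (fun _ => (0 : ℝ)) = 0 :=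
              fun M => mulVec_zero M
            change (0 : ℝ) ≤ _ at hlam
            simp only [show (0 : Fin q → ℝ) = fun _ => (0 : ℝ) from rfl, e0, add_zero]
            linarith
        _ = ENNReal.ofReal (1 - ε / c₁) * ∫⁻ ω, ENNReal.ofReal (V (rb k ω) (x k ω)) ∂S.μ := by
            rw [lintegral_const_mul' _ _ ENNReal.ofReal_ne_top]
        _ ≤ ENNReal.ofReal (1 - ε / c₁) *
            ENNReal.ofReal ((1 - ε / c₁) ^ k * (c₁ * (x0 ⬝ᵥ x0))) := by gcongr
        _ = _ := by
            rw [← ENNReal.ofReal_mul hlam]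
            congr 1
            ring
  calc (∫⁻ ω, sqE (x k ω) ∂S.μ)
      ≤ ∫⁻ ω, ENNReal.ofReal (1 / c₀) * ENNReal.ofReal (V (rb k ω) (x k ω)) ∂S.μ := by
        apply lintegral_mono
        intro ω
        dsimp only
        rw [sqE_eq, ← ENNReal.ofReal_mul (by positivity)]
        apply ENNReal.ofReal_le_ofReal
        have := hlow _ (hin k ω) (x k ω)
        rw [one_div, ← div_eq_inv_mul, le_div_iff₀ hc₀]
        linarith
    _ = ENNReal.ofReal (1 / c₀) * ∫⁻ ω, ENNReal.ofReal (V (rb k ω) (x k ω)) ∂S.μ := by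
        rw [lintegral_const_mul' _ _ ENNReal.ofReal_ne_top]
    _ ≤ ENNReal.ofReal (1 / c₀) *
        ENNReal.ofReal ((1 - ε / c₁) ^ k * (c₁ * (x0 ⬝ᵥ x0))) := by
        gcongr
        exact main k
    _ = _ := by
        rw [← ENNReal.ofReal_mul (by positivity)]
        congr 1
        simp only [dotProduct, sq]
        ring

theorem aux_hinf {NN MM T n m q ℓ : ℕ} [NeZero T] {P : Matrix (Fin NN) (Fin NN) ℝ}
    {Qm : Matrix (Fin MM) (Fin MM) ℝ} (hP0 : ∀ i j, 0 ≤ P i j) (hQ0 : ∀ i j, 0 ≤ Qm i j)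
    (f : Fin MM → Bool)
    (A : Fin NN → Matrix (Fin n) (Fin n) ℝ) (B : Fin NN → Matrix (Fin n) (Fin m) ℝ)
    (C : Fin NN → Matrix (Fin ℓ) (Fin n) ℝ) (D : Fin NN → Matrix (Fin ℓ) (Fin m) ℝ)
    (E : Fin NN → Matrix (Fin n) (Fin q) ℝ)
    (K : Fin NN → Fin T → Matrix (Fin m) (Fin n) ℝ)
    (V : XT NN MM T → (Fin n → ℝ) → ℝ) (ε γ : ℝ) (hε : 0 < ε) (hεγ : ε ≤ γ)
    (hV : ∀ χ, inX f χ → ∀ x, 0 ≤ V χ x) (hV0 : ∀ χ, V χ 0 = 0)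
    (hdec : ∀ χ, inX f χ → ∀ x w, (∑ c : Fin NN × Fin MM, P χ.1 c.1 * Qm χ.2.1 c.2 *
              V (stepX f χ c) (AKmat A B K χ *ᵥ x + E χ.1 *ᵥ w))
            + (CKmat C D K χ *ᵥ x) ⬝ᵥ (CKmat C D K χ *ᵥ x)
            ≤ V χ x + (γ - ε) * (w ⬝ᵥ w)) :
    HinfSqLtSigma P Qm f A B C D E K γ := by
  have hγε : 0 ≤ γ - ε := by linarith
  refine ⟨γ - ε, hγε, by linarith, ?_⟩
  intro S τ₀ _ σ₀ χ₀ _ _ w hw _ _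
  let _ := S.inst
  have _ := S.prob
  have hw' : ∀ k ω ω', SamePath S k ω ω' → w k ω = w k ω' :=
    fun k ω ω' h => adapted_samePath S k (w k) (hw k) ω ω' h
  have hin := rbar_inX (T := T) S.r S.s f τ₀ σ₀
  have hrs := rbar_samePath (T := T) S f τ₀ σ₀
  have hxs := traj_samePath (T := T) S f τ₀ σ₀ (AKmat A B K) (fun χ => E χ.1) w hw' 0
  have hVs := aux_V_step (T := T) hP0 hQ0 S f τ₀ σ₀ (AKmat A B K) (fun χ => E χ.1) w hw' 0 V hV
  set rb : ℕ → S.Ω → XT NN MM T := rbarProc S.r S.s f τ₀ σ₀ with hrb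
  set x := traj (AKmat A B K) (fun χ => E χ.1) rb w 0 with hx
  have step : ∀ k, (∫⁻ ω, ENNReal.ofReal (V (rb (k + 1) ω) (x (k + 1) ω)) ∂S.μ)
      + ∫⁻ ω, sqE (CKmat C D K (rb k ω) *ᵥ x k ω) ∂S.μ
      ≤ (∫⁻ ω, ENNReal.ofReal (V (rb k ω) (x k ω)) ∂S.μ)
        + ENNReal.ofReal (γ - ε) * ∫⁻ ω, sqE (w k ω) ∂S.μ := by
    intro k
    have mz : Measurable fun ω => sqE (CKmat C D K (rb k ω) *ᵥ x k ω) := by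
      apply aux_meas_of_samePath S k
      intro ω ω' h
      rw [hrs k ω ω' h, hxs k ω ω' h]
    have mw : Measurable fun ω => ENNReal.ofReal (γ - ε) * sqE (w k ω) := by
      apply aux_meas_of_samePath S k
      intro ω ω' h
      rw [hw' k ω ω' h]
    rw [hVs k, ← lintegral_add_right _ mz, ← lintegral_const_mul' _ _ ENNReal.ofReal_ne_top,
      ← lintegral_add_right _ mw]
    apply lintegral_mono
    intro ω
    dsimp only
    rw [sqE_eq, sqE_eq, ← ENNReal.ofReal_mul hγε, ← ENNReal.ofReal_add, ← ENNReal.ofReal_add]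
    · exact ENNReal.ofReal_le_ofReal (hdec _ (hin k ω) (x k ω) (w k ω))
    · exact hV _ (hin k ω) _
    · exact mul_nonneg hγε (aux_dot_nonneg _)
    · exact Finset.sum_nonneg fun c _ =>
        mul_nonneg (mul_nonneg (hP0 _ _) (hQ0 _ _)) (hV _ (stepX_inX _ _ _) _)
    · exact aux_dot_nonneg _
  have tele : ∀ k, (∫⁻ ω, ENNReal.ofReal (V (rb k ω) (x k ω)) ∂S.μ)
      + ∑ l ∈ Finset.range k, ∫⁻ ω, sqE (CKmat C D K (rb l ω) *ᵥ x l ω) ∂S.μ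
      ≤ ENNReal.ofReal (γ - ε) * ∑ l ∈ Finset.range k, ∫⁻ ω, sqE (w l ω) ∂S.μ := by
    intro k
    induction k with
    | zero =>
      have : ∀ ω, x 0 ω = 0 := fun ω => rfl
      simp [this, hV0]
    | succ k ih =>
      rw [Finset.sum_range_succ, Finset.sum_range_succ, mul_add]
      calc _ = ((∫⁻ ω, ENNReal.ofReal (V (rb (k + 1) ω) (x (k + 1) ω)) ∂S.μ)
            + ∫⁻ ω, sqE (CKmat C D K (rb k ω) *ᵥ x k ω) ∂S.μ)
            + ∑ l ∈ Finset.range k, ∫⁻ ω, sqE (CKmat C D K (rb l ω) *ᵥ x l ω) ∂S.μ := by ring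
        _ ≤ ((∫⁻ ω, ENNReal.ofReal (V (rb k ω) (x k ω)) ∂S.μ)
            + ENNReal.ofReal (γ - ε) * ∫⁻ ω, sqE (w k ω) ∂S.μ)
            + ∑ l ∈ Finset.range k, ∫⁻ ω, sqE (CKmat C D K (rb l ω) *ᵥ x l ω) ∂S.μ := by
            gcongr ?_ + _
            exact step k
        _ = ((∫⁻ ω, ENNReal.ofReal (V (rb k ω) (x k ω)) ∂S.μ)
            + ∑ l ∈ Finset.range k, ∫⁻ ω, sqE (CKmat C D K (rb l ω) *ᵥ x l ω) ∂S.μ)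
            + ENNReal.ofReal (γ - ε) * ∫⁻ ω, sqE (w k ω) ∂S.μ := by ring
        _ ≤ _ := by gcongr ?_ + _
  rw [ENNReal.tsum_eq_iSup_nat]
  apply iSup_le
  intro k
  calc _ ≤ (∫⁻ ω, ENNReal.ofReal (V (rb k ω) (x k ω)) ∂S.μ)
      + ∑ l ∈ Finset.range k, ∫⁻ ω, sqE (CKmat C D K (rb l ω) *ᵥ x l ω) ∂S.μ := le_add_self
    _ ≤ _ := tele k
    _ ≤ _ := by
      gcongr
      exact ENNReal.sum_le_tsum _

/-- the `H∞` LMIs imply invertibility of the `G_{γ,δ}` and, for gains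
`K_{γ,δ} = F_{γ,δ} G_{γ,δ}⁻¹`, mean square stability of `Σ_K` and `‖Σ_K‖∞² < γ₀`. -/
theorem hinf_lmi_control
    {NN MM T n m q ℓ : ℕ} [NeZero NN] [NeZero MM] [NeZero T]
    [NeZero n] [NeZero m] [NeZero q] [NeZero ℓ]
    (P : Matrix (Fin NN) (Fin NN) ℝ) (Qm : Matrix (Fin MM) (Fin MM) ℝ)
    (hP0 : ∀ i j, 0 ≤ P i j) (hP1 : ∀ i, ∑ j, P i j = 1)
    (hQ0 : ∀ i j, 0 ≤ Qm i j) (hQ1 : ∀ i, ∑ j, Qm i j = 1)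
    (f : Fin MM → Bool)
    (A : Fin NN → Matrix (Fin n) (Fin n) ℝ) (B : Fin NN → Matrix (Fin n) (Fin m) ℝ)
    (C : Fin NN → Matrix (Fin ℓ) (Fin n) ℝ) (D : Fin NN → Matrix (Fin ℓ) (Fin m) ℝ)
    (E : Fin NN → Matrix (Fin n) (Fin q) ℝ)
    (γ₀ : ℝ) (hγ₀ : 0 < γ₀)
    (H X : XT NN MM T → Matrix (Fin n) (Fin n) ℝ)
    (Z : XT NN MM T → XT NN MM T → Matrix (Fin n) (Fin n) ℝ)
    (hXsym : ∀ χ, inX f χ → (X χ).IsHermitian)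
    (hZsym : ∀ χ χ', inX f χ → inX f χ' → (Z χ χ').IsHermitian)
    (G : Fin NN → Fin T → Matrix (Fin n) (Fin n) ℝ)
    (F : Fin NN → Fin T → Matrix (Fin m) (Fin n) ℝ)
    (hLMI1 : ∀ χ : XT NN MM T, inX f χ →
      (hinfBlock γ₀ (G χ.2.2.1 χ.2.2.2 + (G χ.2.2.1 χ.2.2.2)ᵀ - X χ)
        (H χ + (H χ)ᵀ - Fop P Qm f Z χ)
        (A χ.1 * G χ.2.2.1 χ.2.2.2 + B χ.1 * F χ.2.2.1 χ.2.2.2)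
        (E χ.1)
        (C χ.1 * G χ.2.2.1 χ.2.2.2 + D χ.1 * F χ.2.2.1 χ.2.2.2)).PosDef)
    (hLMI2 : ∀ χ χ' : XT NN MM T, inX f χ → inX f χ' →
      (Matrix.fromBlocks (Z χ χ') (H χ)ᵀ (H χ) (X χ')).PosDef) :
    (∀ g d, Admissible f g d → IsUnit (G g d)) ∧
    ∀ K : Fin NN → Fin T → Matrix (Fin m) (Fin n) ℝ,
      (∀ g d, Admissible f g d → K g d = F g d * (G g d)⁻¹) →
      MeanSquareStable P Qm f A B E K
        ∧ HinfSqLtSigma P Qm f A B C D E K γ₀ := by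
  obtain ⟨h1, h2⟩ := aux_real P Qm hP0 hQ0 f A B C D E γ₀ hγ₀ H X Z G F hLMI1 hLMI2
  refine ⟨h1, fun K hK => ?_⟩
  obtain ⟨ε, c₀, c₁, hε, hεγ, hc₀, hc₁, h⟩ := h2 K hK
  refine ⟨?_, ?_⟩
  · refine aux_stable hP0 hQ0 f A B E K (Vfun X) ε c₀ c₁ hε hc₀ hc₁
      (fun χ hχ => (h χ hχ).1) (fun χ hχ => (h χ hχ).2.1) (fun χ hχ x => ?_)
    have h3 := (h χ hχ).2.2 x 0
    have h4 := aux_dot_nonneg (CKmat C D K χ *ᵥ x)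
    simp only [mulVec_zero, add_zero, dotProduct_zero, mul_zero] at h3
    linarith
  · refine aux_hinf hP0 hQ0 f A B C D E K (Vfun X) ε γ₀ hε hεγ
      (fun χ hχ x => (mul_nonneg hc₀.le (aux_dot_nonneg x)).trans ((h χ hχ).1 x))
      (fun χ => by simp [Vfun]) (fun χ hχ x w => ?_)
    have h3 := (h χ hχ).2.2 x w
    have h4 := mul_nonneg hε.le (aux_dot_nonneg x)
    linarith

end
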